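/- arXiv:1601.03353 — 2 statements merged into one kernel-verified Lean document; each statement's English description precedes it below -/
import Mathlib

section
/- Let φ be a holomorphic self-map of 𝔻 whose iterates φ^n converge to 0 uniformly on the compact subsets of 𝔻 (0 is the Denjoy–Wolff point of φ). Then the following are equivalent for the composition operator C_φ on H^∞(𝔻): (i) C_φ is mean ergodic; (ii) C_φ is uniformly mean ergodic; (iii) ‖φ^n‖_∞ = sup_{z∈𝔻}|φ^n(z)| converges to 0 as n → ∞. -/
open Metric Set Filter Complex
open scoped Topology Classical

noncomputable section

/-- Membership in the disc algebra `A(𝔻)`: continuous on the closed unit disc and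
holomorphic on the open unit disc. -/
def IsDiscAlg (f : ℂ → ℂ) : Prop :=
  ContinuousOn f (closedBall (0:ℂ) 1) ∧ DifferentiableOn ℂ f (ball (0:ℂ) 1)

/-- Membership in `H^∞(𝔻)`: bounded and holomorphic on the open unit disc. -/
def IsHInf (f : ℂ → ℂ) : Prop :=
  DifferentiableOn ℂ f (ball (0:ℂ) 1) ∧ ∃ M : ℝ, ∀ z ∈ ball (0:ℂ) 1, ‖f z‖ ≤ M

/-- The Cesàro means `(C_φ)_[n] f = (1/n) ∑_{m=1}^n f ∘ φ^m` of the composition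
operator `C_φ f = f ∘ φ`. -/
def cesaro (φ f : ℂ → ℂ) (n : ℕ) (z : ℂ) : ℂ :=
  (n : ℂ)⁻¹ * ∑ m ∈ Finset.Icc 1 n, f (φ^[m] z)

/-- `C_φ` is mean ergodic on `A(𝔻)`: for each `f ∈ A(𝔻)` the Cesàro means converge
in the sup norm on the closed disc. -/
def MeanErgodicDiscAlg (φ : ℂ → ℂ) : Prop :=
  ∀ f : ℂ → ℂ, IsDiscAlg f →
    ∃ g : ℂ → ℂ, TendstoUniformlyOn (cesaro φ f) g atTop (closedBall (0:ℂ) 1)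

/-- `C_φ` is uniformly mean ergodic on `A(𝔻)`: the Cesàro means converge in operator
norm, i.e. uniformly over the unit ball of `A(𝔻)`. -/
def UnifMeanErgodicDiscAlg (φ : ℂ → ℂ) : Prop :=
  ∃ P : (ℂ → ℂ) → ℂ → ℂ, ∀ ε > (0:ℝ), ∃ N : ℕ, ∀ n ≥ N,
    ∀ f : ℂ → ℂ, IsDiscAlg f → (∀ z ∈ closedBall (0:ℂ) 1, ‖f z‖ ≤ 1) →
      ∀ z ∈ closedBall (0:ℂ) 1, ‖cesaro φ f n z - P f z‖ ≤ ε

/-- `C_φ` is mean ergodic on `H^∞(𝔻)`: for each `f ∈ H^∞(𝔻)` the Cesàro means converge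
in the sup norm on the open disc. -/
def MeanErgodicHInf (φ : ℂ → ℂ) : Prop :=
  ∀ f : ℂ → ℂ, IsHInf f →
    ∃ g : ℂ → ℂ, TendstoUniformlyOn (cesaro φ f) g atTop (ball (0:ℂ) 1)

/-- `C_φ` is uniformly mean ergodic on `H^∞(𝔻)`: the Cesàro means converge in operator
norm, i.e. uniformly over the unit ball of `H^∞(𝔻)`. -/
def UnifMeanErgodicHInf (φ : ℂ → ℂ) : Prop :=
  ∃ P : (ℂ → ℂ) → ℂ → ℂ, ∀ ε > (0:ℝ), ∃ N : ℕ, ∀ n ≥ N,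
    ∀ f : ℂ → ℂ, IsHInf f → (∀ z ∈ ball (0:ℂ) 1, ‖f z‖ ≤ 1) →
      ∀ z ∈ ball (0:ℂ) 1, ‖cesaro φ f n z - P f z‖ ≤ ε

/-- `φ` is an automorphism (biholomorphic self-map) of the open unit disc. -/
def IsDiscAutomorphism (φ : ℂ → ℂ) : Prop :=
  DifferentiableOn ℂ φ (ball (0:ℂ) 1) ∧ MapsTo φ (ball (0:ℂ) 1) (ball (0:ℂ) 1) ∧
  ∃ ψ : ℂ → ℂ, DifferentiableOn ℂ ψ (ball (0:ℂ) 1) ∧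
    MapsTo ψ (ball (0:ℂ) 1) (ball (0:ℂ) 1) ∧
    (∀ z ∈ ball (0:ℂ) 1, ψ (φ z) = z) ∧ ∀ z ∈ ball (0:ℂ) 1, φ (ψ z) = z

/-- An elliptic automorphism of the disc: an automorphism with a fixed point in `𝔻`. -/
def IsEllipticAutomorphism (φ : ℂ → ℂ) : Prop :=
  IsDiscAutomorphism φ ∧ ∃ z ∈ ball (0:ℂ) 1, φ z = z

/-- A hyperbolic automorphism of the disc: an automorphism with exactly two fixed
points, both on the unit circle. -/
def IsHyperbolicAutomorphism (φ : ℂ → ℂ) : Prop :=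
  IsDiscAutomorphism φ ∧ ∃ p q : ℂ, p ≠ q ∧ ‖p‖ = 1 ∧ ‖q‖ = 1 ∧ φ p = p ∧ φ q = q ∧
    ∀ z ∈ closedBall (0:ℂ) 1, φ z = z → z = p ∨ z = q

/-- A parabolic automorphism of the disc: an automorphism with exactly one fixed
point, lying on the unit circle. -/
def IsParabolicAutomorphism (φ : ℂ → ℂ) : Prop :=
  IsDiscAutomorphism φ ∧ ∃ p : ℂ, ‖p‖ = 1 ∧ φ p = p ∧
    ∀ z ∈ closedBall (0:ℂ) 1, φ z = z → z = p

/-- A set `J ⊆ ℕ` has density one: `#(J ∩ [0,N]) / N → 1` as `N → ∞`. -/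
def HasDensityOne (J : Set ℕ) : Prop :=
  Tendsto (fun N : ℕ => (((Finset.range (N + 1)).filter (fun n => n ∈ J)).card : ℝ) / N)
    atTop (𝓝 1)

/-- A typical weight on `𝔻`: continuous, strictly positive, bounded, radial,
non-increasing in `|z|`, and tending to `0` as `|z| → 1`. -/
def IsTypicalWeight (v : ℂ → ℝ) : Prop :=
  ContinuousOn v (ball (0:ℂ) 1) ∧ (∀ z ∈ ball (0:ℂ) 1, 0 < v z) ∧
  (∃ M : ℝ, ∀ z ∈ ball (0:ℂ) 1, v z ≤ M) ∧
  (∀ z ∈ ball (0:ℂ) 1, ∀ w ∈ ball (0:ℂ) 1, ‖z‖ = ‖w‖ → v z = v w) ∧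
  (∀ z ∈ ball (0:ℂ) 1, ∀ w ∈ ball (0:ℂ) 1, ‖z‖ ≤ ‖w‖ → v w ≤ v z) ∧
  (∀ ε > (0:ℝ), ∃ r : ℝ, r < 1 ∧ ∀ z ∈ ball (0:ℂ) 1, r ≤ ‖z‖ → v z < ε)

/-- Membership in the weighted space `H_v^∞`. -/
def IsHvInf (v : ℂ → ℝ) (f : ℂ → ℂ) : Prop :=
  DifferentiableOn ℂ f (ball (0:ℂ) 1) ∧ ∃ M : ℝ, ∀ z ∈ ball (0:ℂ) 1, v z * ‖f z‖ ≤ M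

/-- Membership in the weighted space `H_v^0`. -/
def IsHv0 (v : ℂ → ℝ) (f : ℂ → ℂ) : Prop :=
  IsHvInf v f ∧
  ∀ ε > (0:ℝ), ∃ r : ℝ, r < 1 ∧ ∀ z ∈ ball (0:ℂ) 1, r ≤ ‖z‖ → v z * ‖f z‖ < ε

/-!
(i) ⇒ (iii): if `φ^n` does not tend to `0` uniformly on `𝔻`, then for every `n` and `r < 1` some
orbit segment `z, φ z, …, φ^n z` avoids the disc of radius `r`, because the orbits that meet this
disc by time `n` tend to `0` uniformly. So the points `w_i` of countably many such segments, one of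
each length, can be chosen with `∑ (1 - |w_i|) ≤ 1/4`. The function
`f = exp (-∑ (1 - |w_i|) / (1 - \bar w_i z))` belongs to the unit ball of `H^∞`, has
`|f(w_i)| ≤ e^{-1/2}` because the `i`-th summand alone contributes `1 / (1 + |w_i|) ≥ 1/2`, and has
`f(0) = exp (-∑ (1 - |w_i|)) ≥ e^{-1/4}`. Its Cesàro means tend to `f(0)` pointwise, but the `n`-th
one is at most `e^{-1/2}` in modulus at the start of a segment of length `n`, so the convergence is
not uniform.

(iii) ⇒ (ii): by the Schwarz lemma `|f(φ^n z) - f(0)| ≤ 2 |φ^n z|` for all `f` in the unit ball.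
-/

theorem exists_forall_iterate_notMem_of_not_tendstoUniformlyOn {X : Type*} [UniformSpace X]
    {φ : X → X} {c : X} {s : Set X} {K : ℕ → Set X}
    (hK : ∀ m, TendstoUniformlyOn (fun n z ↦ φ^[n] z) (fun _ ↦ c) atTop (K m))
    (hs : ¬ TendstoUniformlyOn (fun n z ↦ φ^[n] z) (fun _ ↦ c) atTop s) (n : ℕ) :
    ∃ z ∈ s, ∀ m ≤ n, φ^[m] z ∉ K m := by
  contrapose! hs
  intro U hU
  have hUK : ∀ᶠ k in atTop, ∀ m ∈ Iic n, ∀ x ∈ K m, (c, φ^[k] x) ∈ U :=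
    (finite_Iic n).eventually_all.2 fun m _ ↦ hK m U hU
  obtain ⟨N, hN⟩ := eventually_atTop.1 hUK
  filter_upwards [eventually_ge_atTop (N + n)] with k hk z hz
  obtain ⟨m, hmn, hzm⟩ := hs z hz
  have h := hN (k - m) (by lia) m hmn _ hzm
  rwa [← Function.iterate_add_apply, Nat.sub_add_cancel (by lia)] at h

section CesaroMeans

variable {φ f : ℂ → ℂ} {n : ℕ} {z : ℂ}

theorem tendstoUniformlyOn_cesaro_smul {α E : Type*} [NormedAddCommGroup E] [NormedSpace ℝ E]
    {u : ℕ → α → E} {g : α → E} {s : Set α} (hu : TendstoUniformlyOn u g atTop s)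
    (hb : ∀ n, ∃ C, ∀ x ∈ s, ‖u n x - g x‖ ≤ C) :
    TendstoUniformlyOn (fun (n : ℕ) x ↦ (n : ℝ)⁻¹ • ∑ i ∈ Finset.range n, u i x) g atTop s := by
  let a : ℕ → ℝ := fun n ↦ ⨆ x : s, ‖u n x - g x‖
  have ha_nonneg : ∀ n, 0 ≤ a n := fun n ↦ Real.iSup_nonneg fun _ ↦ norm_nonneg _
  have hle : ∀ n, ∀ x ∈ s, ‖u n x - g x‖ ≤ a n := fun n x hx ↦ by
    obtain ⟨C, hC⟩ := hb n
    exact le_ciSup (f := fun x : s ↦ ‖u n x - g x‖) ⟨C, forall_mem_range.2 fun y ↦ hC y y.2⟩ ⟨x, hx⟩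
  rw [Metric.tendstoUniformlyOn_iff] at hu ⊢
  have ha : Tendsto a atTop (𝓝 0) := by
    refine tendsto_order.2 ⟨fun b h ↦ .of_forall fun n ↦ h.trans_le (ha_nonneg n), fun ε hε ↦ ?_⟩
    filter_upwards [hu (ε / 2) (half_pos hε)] with n hn
    refine (Real.iSup_le (fun x ↦ ?_) (half_pos hε).le).trans_lt (half_lt_self hε)
    exact (dist_eq_norm_sub' (g x) (u n x) ▸ hn x x.2).le
  intro ε hε
  filter_upwards [ha.cesaro.eventually_lt_const hε, eventually_ne_atTop 0] with n hn hn0 x hx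
  have hmean : (n : ℝ)⁻¹ • ∑ i ∈ Finset.range n, u i x - g x
      = (n : ℝ)⁻¹ • ∑ i ∈ Finset.range n, (u i x - g x) := by
    rw [Finset.sum_sub_distrib, Finset.sum_const, Finset.card_range, smul_sub,
      ← Nat.cast_smul_eq_nsmul ℝ, inv_smul_smul₀ (Nat.cast_ne_zero.2 hn0)]
  rw [dist_eq_norm_sub', hmean, norm_smul, norm_inv, Real.norm_natCast]
  refine lt_of_le_of_lt ?_ hn
  gcongr
  exact norm_sum_le_of_le _ fun i _ ↦ hle i x hx

theorem cesaro_eq_smul_sum_range (φ f : ℂ → ℂ) (n : ℕ) (z : ℂ) :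
    cesaro φ f n z = (n : ℝ)⁻¹ • ∑ i ∈ Finset.range n, f (φ^[i + 1] z) := by
  rw [cesaro, Finset.range_eq_Ico, Finset.sum_Ico_add' (fun m ↦ f (φ^[m] z)), zero_add,
    Finset.Ico_add_one_right_eq_Icc, Complex.real_smul]
  push_cast
  rfl

theorem cesaro_const_mul (φ f : ℂ → ℂ) (c : ℂ) (n : ℕ) (z : ℂ) :
    cesaro φ (fun x ↦ c * f x) n z = c * cesaro φ f n z := by
  simp only [cesaro, ← Finset.mul_sum, mul_left_comm]

theorem norm_cesaro_le {C : ℝ} (hC : 0 ≤ C) (hf : ∀ m ∈ Finset.Icc 1 n, ‖f (φ^[m] z)‖ ≤ C) :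
    ‖cesaro φ f n z‖ ≤ C := by
  have hsum : ‖∑ m ∈ Finset.Icc 1 n, f (φ^[m] z)‖ ≤ n * C := by
    simpa using norm_sum_le_of_le (Finset.Icc 1 n) hf
  rw [cesaro, norm_mul, norm_inv, Complex.norm_natCast]
  exact inv_mul_le_of_le_mul₀ n.cast_nonneg hC hsum

theorem tendsto_cesaro {c : ℂ} (hf : ContinuousAt f c)
    (hz : Tendsto (fun n ↦ φ^[n] z) atTop (𝓝 c)) :
    Tendsto (fun n ↦ cesaro φ f n z) atTop (𝓝 (f c)) := by
  simp only [cesaro_eq_smul_sum_range]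
  exact ((hf.tendsto.comp hz).comp (tendsto_add_atTop_nat 1)).cesaro_smul

end CesaroMeans

section SzegoKernel

/-- The Szegő kernel `1 / (1 - \bar w z)` of the unit disc. -/
def szegoKernel (w z : ℂ) : ℂ := (1 - starRingEnd ℂ w * z)⁻¹

variable {w z : ℂ}

theorem norm_conj_mul_le (hw : ‖w‖ ≤ 1) : ‖starRingEnd ℂ w * z‖ ≤ ‖z‖ := by
  rw [norm_mul, RCLike.norm_conj]
  exact mul_le_of_le_one_left (norm_nonneg z) hw

theorem one_sub_norm_le_norm_one_sub_conj_mul (hw : ‖w‖ ≤ 1) :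
    1 - ‖z‖ ≤ ‖1 - starRingEnd ℂ w * z‖ :=
  calc 1 - ‖z‖ ≤ ‖(1 : ℂ)‖ - ‖starRingEnd ℂ w * z‖ := by
        rw [norm_one]
        gcongr
        exact norm_conj_mul_le hw
    _ ≤ ‖1 - starRingEnd ℂ w * z‖ := norm_sub_norm_le _ _

theorem norm_szegoKernel_le {r : ℝ} (hw : ‖w‖ ≤ 1) (hr : r < 1) (hz : ‖z‖ ≤ r) :
    ‖szegoKernel w z‖ ≤ (1 - r)⁻¹ := by
  rw [szegoKernel, norm_inv]
  exact inv_anti₀ (sub_pos.2 hr)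
    ((sub_le_sub_left hz 1).trans (one_sub_norm_le_norm_one_sub_conj_mul hw))

theorem norm_one_sub_norm_smul_szegoKernel_le {r : ℝ} (hw : ‖w‖ ≤ 1) (hr : r < 1) (hz : ‖z‖ ≤ r) :
    ‖(1 - ‖w‖) • szegoKernel w z‖ ≤ (1 - ‖w‖) * (1 - r)⁻¹ := by
  have hw' : 0 ≤ 1 - ‖w‖ := sub_nonneg.2 hw
  rw [norm_smul, Real.norm_of_nonneg hw']
  gcongr
  exact norm_szegoKernel_le hw hr hz

theorem one_sub_norm_smul_szegoKernel_re_nonneg (hw : ‖w‖ ≤ 1) (hz : ‖z‖ ≤ 1) :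
    0 ≤ ((1 - ‖w‖) • szegoKernel w z).re := by
  have hre : (starRingEnd ℂ w * z).re ≤ 1 :=
    (Complex.re_le_norm _).trans ((norm_conj_mul_le hw).trans hz)
  have hkernel : 0 ≤ (szegoKernel w z).re := by
    rw [szegoKernel, Complex.inv_re, Complex.sub_re, Complex.one_re]
    exact div_nonneg (sub_nonneg.2 hre) (Complex.normSq_nonneg _)
  rw [Complex.smul_re]
  exact smul_nonneg (sub_nonneg.2 hw) hkernel

theorem szegoKernel_self (w : ℂ) : szegoKernel w w = ((1 - ‖w‖ ^ 2)⁻¹ : ℝ) := by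
  rw [szegoKernel, Complex.conj_mul']
  push_cast
  rfl

theorem half_le_one_sub_norm_smul_szegoKernel_self_re (hw : ‖w‖ < 1) :
    1 / 2 ≤ ((1 - ‖w‖) • szegoKernel w w).re := by
  have h : 0 < 1 - ‖w‖ ^ 2 := by nlinarith [norm_nonneg w]
  rw [szegoKernel_self, Complex.smul_re, Complex.ofReal_re, smul_eq_mul, ← div_eq_mul_inv,
    le_div_iff₀ h]
  nlinarith

theorem differentiableOn_szegoKernel (hw : ‖w‖ ≤ 1) :
    DifferentiableOn ℂ (szegoKernel w) (ball 0 1) := by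
  refine DifferentiableOn.fun_inv (by fun_prop) fun z hz ↦ norm_pos_iff.1 ?_
  exact (sub_pos.2 (mem_ball_zero_iff.1 hz)).trans_le (one_sub_norm_le_norm_one_sub_conj_mul hw)

end SzegoKernel

section SzegoPotential

/-- The series `∑ (1 - |w_i|) / (1 - \bar w_i z)` attached to a family of points of the disc that
satisfies the Blaschke condition `∑ (1 - |w_i|) < ∞`. It has nonnegative real part, which is bounded
below at the points `w_i`, so that `exp (-szegoPotential w)` is small there. -/
def szegoPotential {ι : Type*} (w : ι → ℂ) (z : ℂ) : ℂ :=
  ∑' i, (1 - ‖w i‖) • szegoKernel (w i) z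

variable {ι : Type*} {w : ι → ℂ} {z : ℂ}

theorem szegoPotential_zero (w : ι → ℂ) : szegoPotential w 0 = ((∑' i, (1 - ‖w i‖) : ℝ) : ℂ) := by
  simp [szegoPotential, szegoKernel, Complex.ofReal_tsum]

theorem summable_szegoPotential (hw : ∀ i, ‖w i‖ ≤ 1) (hs : Summable fun i ↦ 1 - ‖w i‖)
    (hz : ‖z‖ < 1) : Summable fun i ↦ (1 - ‖w i‖) • szegoKernel (w i) z :=
  (hs.mul_right _).of_norm_bounded fun i ↦ norm_one_sub_norm_smul_szegoKernel_le (hw i) hz le_rfl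

theorem differentiableOn_szegoPotential (hw : ∀ i, ‖w i‖ ≤ 1)
    (hs : Summable fun i ↦ 1 - ‖w i‖) : DifferentiableOn ℂ (szegoPotential w) (ball 0 1) := by
  intro z hz
  obtain ⟨r, hzr, hr⟩ := exists_between (mem_ball_zero_iff.1 hz)
  have hdiff : DifferentiableOn ℂ (szegoPotential w) (ball 0 r) :=
    differentiableOn_tsum_of_summable_norm (hs.mul_right (1 - r)⁻¹)
      (fun i ↦ ((differentiableOn_szegoKernel (hw i)).mono
        (ball_subset_ball hr.le)).fun_const_smul _)
      isOpen_ball fun i x hx ↦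
        norm_one_sub_norm_smul_szegoKernel_le (hw i) hr (mem_ball_zero_iff.1 hx).le
  exact (hdiff.differentiableAt
    (isOpen_ball.mem_nhds (mem_ball_zero_iff.2 hzr))).differentiableWithinAt

theorem re_one_sub_norm_smul_szegoKernel_le (hw : ∀ i, ‖w i‖ ≤ 1)
    (hs : Summable fun i ↦ 1 - ‖w i‖) (hz : ‖z‖ < 1) (i : ι) :
    ((1 - ‖w i‖) • szegoKernel (w i) z).re ≤ (szegoPotential w z).re :=
  le_hasSum (Complex.hasSum_re (summable_szegoPotential hw hs hz).hasSum) i fun j _ ↦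
    one_sub_norm_smul_szegoKernel_re_nonneg (hw j) hz.le

theorem szegoPotential_re_nonneg (hw : ∀ i, ‖w i‖ ≤ 1) (hs : Summable fun i ↦ 1 - ‖w i‖)
    (hz : ‖z‖ < 1) : 0 ≤ (szegoPotential w z).re :=
  (Complex.hasSum_re (summable_szegoPotential hw hs hz).hasSum).nonneg fun i ↦
    one_sub_norm_smul_szegoKernel_re_nonneg (hw i) hz.le

theorem exists_isHInf_norm_apply_le (hw : ∀ i, ‖w i‖ < 1) (hs : Summable fun i ↦ 1 - ‖w i‖) :
    ∃ f, IsHInf f ∧ ‖f 0‖ = Real.exp (-∑' i, (1 - ‖w i‖)) ∧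
      ∀ i, ‖f (w i)‖ ≤ Real.exp (-(1 / 2)) := by
  have hw' : ∀ i, ‖w i‖ ≤ 1 := fun i ↦ (hw i).le
  refine ⟨fun z ↦ Complex.exp (-szegoPotential w z),
    ⟨(differentiableOn_szegoPotential hw' hs).neg.cexp, 1, fun z hz ↦ ?_⟩, ?_, fun i ↦ ?_⟩
  · rw [Complex.norm_exp, Complex.neg_re, Real.exp_le_one_iff, neg_nonpos]
    exact szegoPotential_re_nonneg hw' hs (mem_ball_zero_iff.1 hz)
  · rw [Complex.norm_exp, szegoPotential_zero, Complex.neg_re, Complex.ofReal_re]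
  · rw [Complex.norm_exp, Complex.neg_re, Real.exp_le_exp, neg_le_neg_iff]
    exact (half_le_one_sub_norm_smul_szegoKernel_self_re (hw i)).trans
      (re_one_sub_norm_smul_szegoKernel_le hw' hs (hw i) i)

end SzegoPotential

section MeanErgodicity

variable {φ : ℂ → ℂ}

theorem IsHInf.const_mul {f : ℂ → ℂ} (hf : IsHInf f) (c : ℂ) : IsHInf fun z ↦ c * f z := by
  obtain ⟨hd, M, hM⟩ := hf
  refine ⟨hd.const_mul c, ‖c‖ * M, fun z hz ↦ ?_⟩
  rw [norm_mul]
  gcongr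
  exact hM z hz

theorem IsHInf.continuousAt {f : ℂ → ℂ} (hf : IsHInf f) {z : ℂ} (hz : z ∈ ball (0 : ℂ) 1) :
    ContinuousAt f z :=
  hf.1.continuousOn.continuousAt (isOpen_ball.mem_nhds hz)

theorem UnifMeanErgodicHInf.meanErgodicHInf (h : UnifMeanErgodicHInf φ) : MeanErgodicHInf φ := by
  obtain ⟨P, hP⟩ := h
  intro f hf
  obtain ⟨M, hM⟩ := hf.2
  let K : ℝ := max M 1
  have hK : 0 < K := lt_max_of_lt_right one_pos
  let g : ℂ → ℂ := fun z ↦ (K : ℂ)⁻¹ * f z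
  have hg : ∀ z ∈ ball (0 : ℂ) 1, ‖g z‖ ≤ 1 := fun z hz ↦ by
    rw [norm_mul, norm_inv, Complex.norm_of_nonneg hK.le, inv_mul_le_one₀ hK]
    exact (hM z hz).trans (le_max_left _ _)
  refine ⟨fun z ↦ K * P g z, Metric.tendstoUniformlyOn_iff.2 fun ε hε ↦ ?_⟩
  obtain ⟨N, hN⟩ := hP (ε / 2 / K) (by positivity)
  filter_upwards [eventually_ge_atTop N] with n hn z hz
  have hcesaro : cesaro φ f n z = K * cesaro φ g n z := by
    rw [cesaro_const_mul, mul_inv_cancel_left₀ (Complex.ofReal_ne_zero.2 hK.ne')]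
  calc dist (K * P g z) (cesaro φ f n z) = K * ‖cesaro φ g n z - P g z‖ := by
        rw [hcesaro, dist_eq_norm_sub', ← mul_sub, norm_mul, Complex.norm_of_nonneg hK.le]
    _ ≤ K * (ε / 2 / K) := by
        gcongr
        exact hN n hn g (hf.const_mul _) hg z hz
    _ = ε / 2 := mul_div_cancel₀ _ hK.ne'
    _ < ε := half_lt_self hε

/-- The closed unit ball of `H^∞(𝔻)`, as a set of functions on `ℂ` whose values outside `𝔻` are
arbitrary. -/
def hInfUnitBall : Set (ℂ → ℂ) := {f | IsHInf f ∧ ∀ z ∈ ball (0 : ℂ) 1, ‖f z‖ ≤ 1}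

theorem norm_sub_apply_zero_le {f : ℂ → ℂ} (hf : f ∈ hInfUnitBall) {z : ℂ}
    (hz : z ∈ ball (0 : ℂ) 1) : ‖f z - f 0‖ ≤ 2 * ‖z‖ := by
  have hmaps : MapsTo f (ball 0 1) (closedBall (f 0) 2) := fun x hx ↦ by
    rw [mem_closedBall, dist_eq_norm]
    linarith [norm_sub_le (f x) (f 0), hf.2 x hx, hf.2 0 (mem_ball_self one_pos)]
  simpa [dist_eq_norm] using Complex.dist_le_div_mul_dist_of_mapsTo_ball hf.1.1 hmaps hz

theorem tendstoUniformlyOn_hInfUnitBall_prod (hφm : MapsTo φ (ball 0 1) (ball 0 1))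
    (hφ : TendstoUniformlyOn (fun n z ↦ φ^[n] z) (fun _ ↦ 0) atTop (ball 0 1)) :
    TendstoUniformlyOn (fun n (p : (ℂ → ℂ) × ℂ) ↦ cesaro φ p.1 n p.2) (fun p ↦ p.1 0) atTop
      (hInfUnitBall ×ˢ ball 0 1) := by
  have hle : ∀ n, ∀ p ∈ hInfUnitBall ×ˢ ball (0 : ℂ) 1,
      ‖p.1 (φ^[n] p.2) - p.1 0‖ ≤ 2 * ‖φ^[n] p.2‖ := fun n p hp ↦
    norm_sub_apply_zero_le hp.1 (hφm.iterate n hp.2)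
  have horbit : TendstoUniformlyOn (fun n (p : (ℂ → ℂ) × ℂ) ↦ p.1 (φ^[n] p.2)) (fun p ↦ p.1 0)
      atTop (hInfUnitBall ×ˢ ball 0 1) := by
    rw [Metric.tendstoUniformlyOn_iff] at hφ ⊢
    intro ε hε
    filter_upwards [hφ (ε / 2) (half_pos hε)] with n hn p hp
    have hsmall := hn p.2 hp.2
    rw [dist_zero_left] at hsmall
    rw [dist_eq_norm_sub']
    linarith [hle n p hp]
  simp only [cesaro_eq_smul_sum_range]
  refine tendstoUniformlyOn_cesaro_smul (fun U hU ↦ (tendsto_add_atTop_nat 1).eventually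
    (horbit U hU)) fun n ↦ ⟨2, fun p hp ↦ (hle (n + 1) p hp).trans ?_⟩
  linarith [mem_ball_zero_iff.1 (hφm.iterate (n + 1) hp.2)]

theorem unifMeanErgodicHInf_of_tendstoUniformlyOn (hφm : MapsTo φ (ball 0 1) (ball 0 1))
    (hφ : TendstoUniformlyOn (fun n z ↦ φ^[n] z) (fun _ ↦ 0) atTop (ball 0 1)) :
    UnifMeanErgodicHInf φ := by
  refine ⟨fun f _ ↦ f 0, fun ε hε ↦ ?_⟩
  obtain ⟨N, hN⟩ := eventually_atTop.1
    (Metric.tendstoUniformlyOn_iff.1 (tendstoUniformlyOn_hInfUnitBall_prod hφm hφ) ε hε)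
  refine ⟨N, fun n hn f hf hf1 z hz ↦ ?_⟩
  rw [← dist_eq_norm_sub']
  exact (hN n hn (f, z) ⟨⟨hf, hf1⟩, hz⟩).le

theorem MeanErgodicHInf.tendstoUniformlyOn_cesaro
    (hDW : TendstoLocallyUniformlyOn (fun n z ↦ φ^[n] z) (fun _ ↦ 0) atTop (ball 0 1))
    (h : MeanErgodicHInf φ) {f : ℂ → ℂ} (hf : IsHInf f) :
    TendstoUniformlyOn (cesaro φ f) (fun _ ↦ f 0) atTop (ball 0 1) := by
  obtain ⟨g, hg⟩ := h f hf
  exact hg.congr_right fun z hz ↦ tendsto_nhds_unique (hg.tendsto_at hz)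
    (tendsto_cesaro (hf.continuousAt (mem_ball_self one_pos)) (hDW.tendsto_at hz))

theorem exists_isHInf_norm_iterate_le (hφm : MapsTo φ (ball 0 1) (ball 0 1))
    (hDW : TendstoLocallyUniformlyOn (fun n z ↦ φ^[n] z) (fun _ ↦ 0) atTop (ball 0 1))
    (hφ : ¬ TendstoUniformlyOn (fun n z ↦ φ^[n] z) (fun _ ↦ 0) atTop (ball 0 1)) :
    ∃ f, IsHInf f ∧ Real.exp (-(1 / 4)) ≤ ‖f 0‖ ∧
      ∀ n, ∃ z ∈ ball (0 : ℂ) 1, ∀ m ≤ n, ‖f (φ^[m] z)‖ ≤ Real.exp (-(1 / 2)) := by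
  obtain ⟨ε, hε, c, hεc, hc⟩ := posSumOfEncodable (show (0 : ℝ) < 1 / 4 by norm_num) (ℕ × ℕ)
  have hclosed : ∀ r < 1, TendstoUniformlyOn (fun n z ↦ φ^[n] z) (fun _ ↦ 0) atTop
      (closedBall (0 : ℂ) r) := fun r hr ↦
    (tendstoLocallyUniformlyOn_iff_forall_isCompact isOpen_ball).1 hDW _
      (closedBall_subset_ball hr) (isCompact_closedBall 0 r)
  choose z hz hzε using fun k ↦ exists_forall_iterate_notMem_of_not_tendstoUniformlyOn
    (fun m ↦ hclosed (1 - ε (k, m)) (sub_lt_self 1 (hε _))) hφ k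
  let w : {p : ℕ × ℕ | p.2 ≤ p.1} → ℂ := fun p ↦ φ^[p.1.2] (z p.1.1)
  have hw : ∀ p, ‖w p‖ < 1 := fun p ↦ mem_ball_zero_iff.1 (hφm.iterate _ (hz _))
  have hwε : ∀ p, 1 - ‖w p‖ ≤ ε p := fun p ↦ by
    have hfar := hzε p.1.1 p.1.2 p.2
    rw [mem_closedBall_zero_iff, not_le] at hfar
    exact (sub_lt_comm.1 hfar).le
  have hεw : Summable fun p : {p : ℕ × ℕ | p.2 ≤ p.1} ↦ ε p := hεc.summable.subtype _
  have hs : Summable fun p ↦ 1 - ‖w p‖ :=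
    hεw.of_nonneg_of_le (fun p ↦ sub_nonneg.2 (hw p).le) hwε
  have hsum : ∑' p, (1 - ‖w p‖) ≤ 1 / 4 :=
    calc ∑' p, (1 - ‖w p‖) ≤ ∑' p : {p : ℕ × ℕ | p.2 ≤ p.1}, ε p := hs.tsum_le_tsum hwε hεw
      _ ≤ ∑' p, ε p := hεc.summable.tsum_subtype_le ε _ fun p ↦ (hε p).le
      _ ≤ 1 / 4 := hεc.tsum_eq.trans_le hc
  obtain ⟨f, hf, hf0, hfw⟩ := exists_isHInf_norm_apply_le hw hs
  refine ⟨f, hf, ?_, fun n ↦ ⟨z n, hz n, fun m hm ↦ hfw ⟨(n, m), hm⟩⟩⟩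
  rw [hf0]
  gcongr

theorem MeanErgodicHInf.tendstoUniformlyOn_iterate (hφm : MapsTo φ (ball 0 1) (ball 0 1))
    (hDW : TendstoLocallyUniformlyOn (fun n z ↦ φ^[n] z) (fun _ ↦ 0) atTop (ball 0 1))
    (h : MeanErgodicHInf φ) :
    TendstoUniformlyOn (fun n z ↦ φ^[n] z) (fun _ ↦ 0) atTop (ball 0 1) := by
  by_contra hφ
  obtain ⟨f, hf, hf0, hfz⟩ := exists_isHInf_norm_iterate_le hφm hDW hφ
  have hgap : Real.exp (-(1 / 2)) < Real.exp (-(1 / 4)) := by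
    gcongr
    norm_num
  obtain ⟨n, hn⟩ := (Metric.tendstoUniformlyOn_iff.1 (h.tendstoUniformlyOn_cesaro hDW hf) _
    (sub_pos.2 hgap)).exists
  obtain ⟨z, hz, hzn⟩ := hfz n
  have hclose : ‖f 0 - cesaro φ f n z‖ < Real.exp (-(1 / 4)) - Real.exp (-(1 / 2)) :=
    dist_eq_norm_sub (f 0) _ ▸ hn z hz
  have hcesaro : ‖cesaro φ f n z‖ ≤ Real.exp (-(1 / 2)) :=
    norm_cesaro_le (Real.exp_pos _).le fun m hm ↦ hzn m (Finset.mem_Icc.1 hm).2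
  linarith [norm_sub_norm_le (f 0) (cesaro φ f n z)]

end MeanErgodicity

theorem stmt_7_general {φ : ℂ → ℂ} (hφm : MapsTo φ (ball 0 1) (ball 0 1))
    (hDW : TendstoLocallyUniformlyOn (fun n z ↦ φ^[n] z) (fun _ ↦ 0) atTop (ball 0 1)) :
    List.TFAE [MeanErgodicHInf φ, UnifMeanErgodicHInf φ,
      TendstoUniformlyOn (fun n z ↦ φ^[n] z) (fun _ ↦ 0) atTop (ball 0 1)] := by
  tfae_have 1 → 3 := fun h ↦ h.tendstoUniformlyOn_iterate hφm hDW
  tfae_have 3 → 2 := unifMeanErgodicHInf_of_tendstoUniformlyOn hφm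
  tfae_have 2 → 1 := UnifMeanErgodicHInf.meanErgodicHInf
  tfae_finish

/-- **Interior Denjoy–Wolff point, `H^∞(𝔻)` case.** Let `φ` be a holomorphic self-map of `𝔻`
with Denjoy–Wolff point `0` (i.e. `φ^n → 0` uniformly on compact subsets of `𝔻`). Then the
following are equivalent: (i) `C_φ` is mean ergodic on `H^∞(𝔻)`; (ii) `C_φ` is uniformly
mean ergodic on `H^∞(𝔻)`; (iii) `‖φ^n‖_∞ → 0`, i.e. `φ^n → 0` uniformly on `𝔻`. -/
theorem stmt_7 (φ : ℂ → ℂ) (hφd : DifferentiableOn ℂ φ (ball (0:ℂ) 1))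
    (hφm : MapsTo φ (ball (0:ℂ) 1) (ball (0:ℂ) 1))
    (hDW : TendstoLocallyUniformlyOn (fun (n : ℕ) (z : ℂ) => φ^[n] z) (fun _ => (0:ℂ))
      atTop (ball (0:ℂ) 1)) :
    (MeanErgodicHInf φ ↔
      TendstoUniformlyOn (fun (n : ℕ) (z : ℂ) => φ^[n] z) (fun _ => (0:ℂ)) atTop
        (ball (0:ℂ) 1)) ∧
    (UnifMeanErgodicHInf φ ↔
      TendstoUniformlyOn (fun (n : ℕ) (z : ℂ) => φ^[n] z) (fun _ => (0:ℂ)) atTop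
        (ball (0:ℂ) 1)) := by
  have h := stmt_7_general hφm hDW
  exact ⟨h.out 0 2, h.out 1 2⟩
end
end

section
/- Let φ be a finite Blaschke product which is not an elliptic automorphism of 𝔻. Then the composition operator C_φ : A(𝔻) → A(𝔻) is mean ergodic if and only if φ is a parabolic automorphism of 𝔻. -/
open Metric Set Filter Complex
open scoped Topology Classical

noncomputable section

/-!
Suppose `C_φ` is mean ergodic and `φ` is not an automorphism. Testing on the identity function and
using the Schwarz–Pick lemma, all orbits in `𝔻` converge to one point `p`; testing on polynomials,
`p` is the only periodic point of `φ` in the closed disc. But `φ ∘ φ` has degree at least `4` on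
the unit circle and so has more than one fixed point there. Hence `φ` is an automorphism, and it is
not hyperbolic, because the repelling fixed point would be a second periodic point.

Conversely, a parabolic automorphism is a translation in the coordinate `(z - p)⁻¹`, so orbits
leave a neighbourhood of `p` a uniformly bounded number of times and the Cesàro means of `f`
converge uniformly to `f p`.
-/

open Function
open scoped ComplexConjugate Real

section BlaschkeFactor

/-- The Blaschke factor with zero `a`; for `‖a‖ < 1` it is the automorphism of `𝔻` taking `a`
to `0`. -/
def blaschkeFactor (a z : ℂ) : ℂ := (z - a) / (1 - z * conj a)

variable {a z : ℂ}

lemma one_sub_mul_conj_re_pos (ha : ‖a‖ < 1) (hz : ‖z‖ ≤ 1) : 0 < (1 - z * conj a).re := by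
  have hre := Complex.re_le_norm (z * conj a)
  rw [norm_mul, RCLike.norm_conj] at hre
  rw [Complex.sub_re, Complex.one_re]
  nlinarith [norm_nonneg z, norm_nonneg a]

lemma one_sub_mul_conj_ne_zero (ha : ‖a‖ < 1) (hz : ‖z‖ ≤ 1) : 1 - z * conj a ≠ 0 := fun h => by
  simpa [h] using one_sub_mul_conj_re_pos ha hz

lemma blaschkeFactor_mul_one_sub (h : 1 - z * conj a ≠ 0) :
    blaschkeFactor a z * (1 - z * conj a) = z - a :=
  div_mul_cancel₀ _ h

lemma normSq_one_sub_mul_conj_sub_normSq (a z : ℂ) :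
    normSq (1 - z * conj a) - normSq (z - a) = (1 - normSq z) * (1 - normSq a) := by
  simp only [normSq_apply, sub_re, sub_im, mul_re, mul_im, conj_re, conj_im, one_re, one_im]
  ring

@[simp]
lemma blaschkeFactor_self (a : ℂ) : blaschkeFactor a a = 0 := by simp [blaschkeFactor]

@[simp]
lemma blaschkeFactor_zero_left (z : ℂ) : blaschkeFactor 0 z = z := by simp [blaschkeFactor]

lemma blaschkeFactor_ne_zero (ha : ‖a‖ < 1) (hz : ‖z‖ ≤ 1) (hza : z ≠ a) :
    blaschkeFactor a z ≠ 0 :=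
  div_ne_zero (sub_ne_zero.2 hza) (one_sub_mul_conj_ne_zero ha hz)

lemma norm_blaschkeFactor_lt_one (ha : ‖a‖ < 1) (hz : ‖z‖ < 1) : ‖blaschkeFactor a z‖ < 1 := by
  have hpos : 0 < (1 - normSq z) * (1 - normSq a) := by
    simp only [normSq_eq_norm_sq]
    exact mul_pos (by nlinarith [norm_nonneg z]) (by nlinarith [norm_nonneg a])
  rw [← normSq_one_sub_mul_conj_sub_normSq, sub_pos, normSq_eq_norm_sq, normSq_eq_norm_sq] at hpos
  rw [blaschkeFactor, norm_div,
    div_lt_one (norm_pos_iff.2 (one_sub_mul_conj_ne_zero ha hz.le))]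
  exact lt_of_pow_lt_pow_left₀ 2 (norm_nonneg _) hpos

lemma mapsTo_blaschkeFactor (ha : ‖a‖ < 1) : MapsTo (blaschkeFactor a) (ball 0 1) (ball 0 1) :=
  fun _ hz => mem_ball_zero_iff.2 (norm_blaschkeFactor_lt_one ha (mem_ball_zero_iff.1 hz))

lemma differentiableAt_blaschkeFactor (h : 1 - z * conj a ≠ 0) :
    DifferentiableAt ℂ (blaschkeFactor a) z := by
  unfold blaschkeFactor
  fun_prop (disch := exact h)

lemma differentiableOn_blaschkeFactor (ha : ‖a‖ < 1) :
    DifferentiableOn ℂ (blaschkeFactor a) (closedBall 0 1) := fun _ hz =>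
  (differentiableAt_blaschkeFactor
    (one_sub_mul_conj_ne_zero ha (mem_closedBall_zero_iff.1 hz))).differentiableWithinAt

lemma blaschkeFactor_neg_blaschkeFactor (ha : ‖a‖ < 1) (hz : ‖z‖ < 1) :
    blaschkeFactor (-a) (blaschkeFactor a z) = z := by
  have hden := one_sub_mul_conj_ne_zero ha hz.le
  have hden' := one_sub_mul_conj_ne_zero (a := -a) (by simpa using ha)
    (norm_blaschkeFactor_lt_one ha hz).le
  have hmul := blaschkeFactor_mul_one_sub hden
  rw [blaschkeFactor, div_eq_iff hden', map_neg]
  apply mul_right_cancel₀ hden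
  linear_combination (1 - z * conj a) * hmul

end BlaschkeFactor

section Automorphism

variable {φ ψ : ℂ → ℂ} {a c z w : ℂ}

lemma IsDiscAutomorphism.comp (hφ : IsDiscAutomorphism φ) (hψ : IsDiscAutomorphism ψ) :
    IsDiscAutomorphism (φ ∘ ψ) := by
  obtain ⟨hφd, hφm, φ', hφ'd, hφ'm, hφ'φ, hφφ'⟩ := hφ
  obtain ⟨hψd, hψm, ψ', hψ'd, hψ'm, hψ'ψ, hψψ'⟩ := hψ
  refine ⟨hφd.comp hψd hψm, hφm.comp hψm, ψ' ∘ φ', hψ'd.comp hφ'd hφ'm, hψ'm.comp hφ'm, ?_, ?_⟩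
  · intro z hz
    simp only [comp_apply, hφ'φ _ (hψm hz), hψ'ψ z hz]
  · intro z hz
    simp only [comp_apply, hψψ' _ (hφ'm hz), hφφ' z hz]

lemma IsDiscAutomorphism.congr (hφ : IsDiscAutomorphism φ) (h : EqOn ψ φ (ball 0 1)) :
    IsDiscAutomorphism ψ := by
  obtain ⟨hd, hm, φ', hd', hm', hleft, hright⟩ := hφ
  exact ⟨hd.congr h, hm.congr h.symm, φ', hd', hm', fun z hz => by rw [h hz, hleft z hz],
    fun z hz => by rw [h (hm' hz), hright z hz]⟩

lemma isDiscAutomorphism_blaschkeFactor (ha : ‖a‖ < 1) :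
    IsDiscAutomorphism (blaschkeFactor a) := by
  have ha' : ‖-a‖ < 1 := by rwa [norm_neg]
  refine ⟨(differentiableOn_blaschkeFactor ha).mono ball_subset_closedBall,
    mapsTo_blaschkeFactor ha, blaschkeFactor (-a),
    (differentiableOn_blaschkeFactor ha').mono ball_subset_closedBall,
    mapsTo_blaschkeFactor ha', fun z hz => ?_, fun z hz => ?_⟩
  · exact blaschkeFactor_neg_blaschkeFactor ha (mem_ball_zero_iff.1 hz)
  · simpa only [neg_neg] using blaschkeFactor_neg_blaschkeFactor ha' (mem_ball_zero_iff.1 hz)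

lemma isDiscAutomorphism_const_mul (hc : ‖c‖ = 1) : IsDiscAutomorphism (c * ·) := by
  have hc0 : c ≠ 0 := norm_ne_zero_iff.1 (hc ▸ one_ne_zero)
  refine ⟨by fun_prop, fun z hz => ?_, (c⁻¹ * ·), by fun_prop, fun z hz => ?_,
    fun z _ => inv_mul_cancel_left₀ hc0 z, fun z _ => mul_inv_cancel_left₀ hc0 z⟩ <;>
  simpa [hc] using hz

/-- `φ` recentred by automorphisms of `𝔻` so that `w ↦ φ w` becomes `0 ↦ 0`, which makes the
Schwarz lemma applicable. -/
def recentre (φ : ℂ → ℂ) (w : ℂ) : ℂ → ℂ :=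
  blaschkeFactor (φ w) ∘ φ ∘ blaschkeFactor (-w)

@[simp]
lemma recentre_zero (φ : ℂ → ℂ) (w : ℂ) : recentre φ w 0 = 0 := by
  have hw : blaschkeFactor (-w) 0 = w := by simp [blaschkeFactor]
  simp [recentre, hw]

lemma recentre_blaschkeFactor (hz : ‖z‖ < 1) (hw : ‖w‖ < 1) :
    recentre φ w (blaschkeFactor w z) = blaschkeFactor (φ w) (φ z) := by
  simp only [recentre, comp_apply, blaschkeFactor_neg_blaschkeFactor hw hz]

lemma mapsTo_recentre (hm : MapsTo φ (ball 0 1) (ball 0 1)) (hw : ‖w‖ < 1) :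
    MapsTo (recentre φ w) (ball 0 1) (ball 0 1) :=
  (mapsTo_blaschkeFactor (mem_ball_zero_iff.1 (hm (mem_ball_zero_iff.2 hw)))).comp
    (hm.comp (mapsTo_blaschkeFactor (by rwa [norm_neg])))

lemma differentiableOn_recentre (hd : DifferentiableOn ℂ φ (ball 0 1))
    (hm : MapsTo φ (ball 0 1) (ball 0 1)) (hw : ‖w‖ < 1) :
    DifferentiableOn ℂ (recentre φ w) (ball 0 1) := by
  have hw' : ‖-w‖ < 1 := by rwa [norm_neg]
  have hφw : ‖φ w‖ < 1 := mem_ball_zero_iff.1 (hm (mem_ball_zero_iff.2 hw))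
  have hmw := mapsTo_blaschkeFactor hw'
  have hdw := (differentiableOn_blaschkeFactor hw').mono ball_subset_closedBall
  exact ((differentiableOn_blaschkeFactor hφw).mono ball_subset_closedBall).comp
    (hd.comp hdw hmw) (hm.comp hmw)

theorem norm_blaschkeFactor_map_le (hd : DifferentiableOn ℂ φ (ball 0 1))
    (hm : MapsTo φ (ball 0 1) (ball 0 1)) (hz : ‖z‖ < 1) (hw : ‖w‖ < 1) :
    ‖blaschkeFactor (φ w) (φ z)‖ ≤ ‖blaschkeFactor w z‖ := by
  rw [← recentre_blaschkeFactor hz hw]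
  exact norm_le_norm_of_mapsTo_ball (differentiableOn_recentre hd hm hw)
    ((mapsTo_recentre hm hw).mono_right ball_subset_closedBall) (recentre_zero φ w)
    (norm_blaschkeFactor_lt_one hw hz)

theorem exists_eq_mul_of_norm_map_eq {f : ℂ → ℂ} (hd : DifferentiableOn ℂ f (ball 0 1))
    (hm : MapsTo f (ball 0 1) (ball 0 1)) (h0 : f 0 = 0) (hz : ‖z‖ < 1) (hz0 : z ≠ 0)
    (h : ‖f z‖ = ‖z‖) : ∃ c : ℂ, ‖c‖ = 1 ∧ ∀ x ∈ ball (0 : ℂ) 1, f x = c * x := by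
  obtain ⟨c, hc, hfc⟩ := affine_of_mapsTo_ball_of_exists_norm_dslope_eq_div' (R₂ := 1) hd
    (by simpa only [h0] using hm.mono_right ball_subset_closedBall)
    ⟨z, mem_ball_zero_iff.2 hz, by
      rw [dslope_of_ne _ hz0, slope_def_field, h0]
      simp [h, hz0]⟩
  refine ⟨c, by simpa using hc, fun x hx => ?_⟩
  simpa [h0, mul_comm] using hfc hx

theorem isDiscAutomorphism_of_norm_blaschkeFactor_map_eq (hd : DifferentiableOn ℂ φ (ball 0 1))
    (hm : MapsTo φ (ball 0 1) (ball 0 1)) (hz : ‖z‖ < 1) (hw : ‖w‖ < 1) (hzw : z ≠ w)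
    (h : ‖blaschkeFactor (φ w) (φ z)‖ = ‖blaschkeFactor w z‖) : IsDiscAutomorphism φ := by
  have hφw : ‖φ w‖ < 1 := mem_ball_zero_iff.1 (hm (mem_ball_zero_iff.2 hw))
  rw [← recentre_blaschkeFactor hz hw] at h
  obtain ⟨c, hc, hrot⟩ := exists_eq_mul_of_norm_map_eq (differentiableOn_recentre hd hm hw)
    (mapsTo_recentre hm hw) (recentre_zero φ w) (norm_blaschkeFactor_lt_one hw hz)
    (blaschkeFactor_ne_zero hw hz.le hzw) h
  refine ((isDiscAutomorphism_blaschkeFactor (a := -φ w) (by rwa [norm_neg])).comp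
    ((isDiscAutomorphism_const_mul hc).comp (isDiscAutomorphism_blaschkeFactor hw))).congr ?_
  intro x hx
  have hφx := mem_ball_zero_iff.1 (hm hx)
  simp only [comp_apply]
  rw [← hrot _ (mapsTo_blaschkeFactor hw hx), recentre_blaschkeFactor (mem_ball_zero_iff.1 hx) hw,
    blaschkeFactor_neg_blaschkeFactor hφw hφx]

end Automorphism

section Dynamics

lemma eq_of_mapClusterPt_of_tendsto {X α : Type*} [TopologicalSpace X] [T2Space X] {l : Filter α}
    {u : α → X} {x y : X} (hx : MapClusterPt x l u) (hy : Tendsto u l (𝓝 y)) : x = y :=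
  eq_of_nhds_neBot (hx.clusterPt.mono hy)

/-- A form of LaSalle's invariance principle, with Lyapunov function `V`. -/
lemma map_eq_of_antitone_of_mapClusterPt {X : Type*} [TopologicalSpace X] {T : X → X}
    {V : X → ℝ} {x y : X} (hanti : Antitone fun k => V (T^[k] x))
    (hbdd : BddBelow (range fun k => V (T^[k] x)))
    (hy : MapClusterPt y atTop (T^[·] x)) (hT : ContinuousAt T y)
    (hVy : ContinuousAt V y) (hVTy : ContinuousAt V (T y)) : V (T y) = V y := by
  have hlim := tendsto_atTop_ciInf hanti hbdd
  have hlim' : Tendsto (fun k => V (T (T^[k] x))) atTop (𝓝 (⨅ k, V (T^[k] x))) := by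
    simpa only [← iterate_succ_apply'] using (tendsto_add_atTop_iff_nat 1).2 hlim
  exact (eq_of_mapClusterPt_of_tendsto (hy.continuousAt_comp (hVTy.comp hT)) hlim').trans
    (eq_of_mapClusterPt_of_tendsto (hy.continuousAt_comp hVy) hlim).symm

variable {φ : ℂ → ℂ} {z w ζ : ℂ}

/-- A symbol of a composition operator on `A(𝔻)`: an element of `A(𝔻)` mapping `𝔻` into itself. -/
structure IsSymbol (φ : ℂ → ℂ) : Prop where
  isDiscAlg : IsDiscAlg φ
  mapsTo_ball : MapsTo φ (ball 0 1) (ball 0 1)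

lemma IsSymbol.mapsTo_closedBall (hφ : IsSymbol φ) :
    MapsTo φ (closedBall 0 1) (closedBall 0 1) := by
  have h := hφ.mapsTo_ball.closure_of_continuousOn
    (by simpa only [closure_ball (0 : ℂ) one_ne_zero] using hφ.isDiscAlg.1)
  simpa only [closure_ball (0 : ℂ) one_ne_zero] using h

lemma IsSymbol.continuousAt (hφ : IsSymbol φ) (hz : z ∈ ball (0 : ℂ) 1) : ContinuousAt φ z :=
  hφ.isDiscAlg.2.continuousOn.continuousAt (isOpen_ball.mem_nhds hz)

lemma IsDiscAlg.comp {f : ℂ → ℂ} (hf : IsDiscAlg f) (hφ : IsSymbol φ) : IsDiscAlg (f ∘ φ) :=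
  ⟨hf.1.comp hφ.isDiscAlg.1 hφ.mapsTo_closedBall, hf.2.comp hφ.isDiscAlg.2 hφ.mapsTo_ball⟩

lemma IsSymbol.iterate (hφ : IsSymbol φ) (n : ℕ) : IsSymbol φ^[n] := by
  induction n with
  | zero => exact ⟨⟨continuousOn_id, differentiableOn_id⟩, mapsTo_id _⟩
  | succ n ih => exact ⟨ih.isDiscAlg.comp hφ, ih.mapsTo_ball.comp hφ.mapsTo_ball⟩

lemma IsSymbol.eq_of_isFixedPt (hφ : IsSymbol φ) (hna : ¬ IsDiscAutomorphism φ) (hz : ‖z‖ < 1)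
    (hw : ‖w‖ < 1) (hφz : IsFixedPt φ z) (hφw : IsFixedPt φ w) : z = w := by
  by_contra hzw
  exact hna (isDiscAutomorphism_of_norm_blaschkeFactor_map_eq hφ.isDiscAlg.2 hφ.mapsTo_ball hz hw
    hzw (by rw [hφz.eq, hφw.eq]))

lemma IsSymbol.antitone_norm_blaschkeFactor_iterate (hφ : IsSymbol φ) (hz : z ∈ ball (0 : ℂ) 1) :
    Antitone fun k => ‖blaschkeFactor (φ (φ^[k] z)) (φ^[k] z)‖ := by
  refine antitone_nat_of_succ_le fun k => ?_
  have hk := hφ.mapsTo_ball.iterate k hz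
  simp only [iterate_succ_apply']
  exact norm_blaschkeFactor_map_le hφ.isDiscAlg.2 hφ.mapsTo_ball (mem_ball_zero_iff.1 hk)
    (mem_ball_zero_iff.1 (hφ.mapsTo_ball hk))

lemma IsSymbol.continuousAt_norm_blaschkeFactor (hφ : IsSymbol φ) (hz : z ∈ ball (0 : ℂ) 1) :
    ContinuousAt (fun x => ‖blaschkeFactor (φ x) x‖) z := by
  have hcont := hφ.continuousAt hz
  have hden := one_sub_mul_conj_ne_zero (mem_ball_zero_iff.1 (hφ.mapsTo_ball hz))
    (mem_ball_zero_iff.1 hz).le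
  exact ((continuousAt_id.sub hcont).div (continuousAt_const.sub
    (continuousAt_id.mul (continuous_conj.continuousAt.comp hcont))) hden).norm

lemma IsSymbol.isFixedPt_of_mapClusterPt_of_mem_ball (hφ : IsSymbol φ)
    (hna : ¬ IsDiscAutomorphism φ) (hz : z ∈ ball (0 : ℂ) 1) (hζ : ζ ∈ ball (0 : ℂ) 1)
    (hcl : MapClusterPt ζ atTop (φ^[·] z)) : IsFixedPt φ ζ := by
  have hφζ := hφ.mapsTo_ball hζ
  have heq := map_eq_of_antitone_of_mapClusterPt
    (V := fun x => ‖blaschkeFactor (φ x) x‖) (hφ.antitone_norm_blaschkeFactor_iterate hz)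
    ⟨0, by rintro _ ⟨k, rfl⟩; exact norm_nonneg _⟩ hcl (hφ.continuousAt hζ)
    (hφ.continuousAt_norm_blaschkeFactor hζ) (hφ.continuousAt_norm_blaschkeFactor hφζ)
  by_contra hne
  exact hna (isDiscAutomorphism_of_norm_blaschkeFactor_map_eq hφ.isDiscAlg.2 hφ.mapsTo_ball
    (mem_ball_zero_iff.1 hζ) (mem_ball_zero_iff.1 hφζ) (Ne.symm hne) heq)

lemma norm_one_sub_mul_conj_eq_of_norm_eq_one (hz : ‖z‖ = 1) (w : ℂ) :
    ‖1 - z * conj w‖ = ‖z - w‖ := by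
  have h := normSq_one_sub_mul_conj_sub_normSq w z
  rw [normSq_eq_norm_sq z, hz, one_pow, sub_self, zero_mul, sub_eq_zero, normSq_eq_norm_sq,
    normSq_eq_norm_sq] at h
  exact (pow_left_inj₀ (norm_nonneg _) (norm_nonneg _) two_ne_zero).1 h

/-- Along the orbit `‖x - φ x‖ ≤ d ‖1 - x conj (φ x)‖` with `d < 1` the initial pseudohyperbolic
displacement, whereas at a point of the circle the two norms coincide. -/
lemma IsSymbol.isFixedPt_of_mapClusterPt_of_norm_eq_one (hφ : IsSymbol φ)
    (hz : z ∈ ball (0 : ℂ) 1) (hζ : ‖ζ‖ = 1) (hcl : MapClusterPt ζ atTop (φ^[·] z)) :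
    IsFixedPt φ ζ := by
  set d := ‖blaschkeFactor (φ z) z‖
  have hd : d < 1 := norm_blaschkeFactor_lt_one (mem_ball_zero_iff.1 (hφ.mapsTo_ball hz))
    (mem_ball_zero_iff.1 hz)
  have hclosed : IsClosed {x ∈ closedBall (0 : ℂ) 1 | ‖x - φ x‖ ≤ d * ‖1 - x * conj (φ x)‖} :=
    isClosed_closedBall.isClosed_le (continuousOn_id.sub hφ.isDiscAlg.1).norm
      (continuousOn_const.mul (continuousOn_const.sub (continuousOn_id.mul
        (continuous_conj.comp_continuousOn hφ.isDiscAlg.1))).norm)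
  have horbit : ∀ k, φ^[k] z ∈
      {x ∈ closedBall (0 : ℂ) 1 | ‖x - φ x‖ ≤ d * ‖1 - x * conj (φ x)‖} := fun k => by
    have hk := hφ.mapsTo_ball.iterate k hz
    have hden := one_sub_mul_conj_ne_zero (mem_ball_zero_iff.1 (hφ.mapsTo_ball hk))
      (mem_ball_zero_iff.1 hk).le
    refine ⟨ball_subset_closedBall hk, ?_⟩
    rw [← blaschkeFactor_mul_one_sub hden, norm_mul]
    gcongr
    exact hφ.antitone_norm_blaschkeFactor_iterate hz (Nat.zero_le k)
  have hle := (hclosed.mem_of_mapClusterPt hcl (.of_forall horbit)).2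
  rw [norm_one_sub_mul_conj_eq_of_norm_eq_one hζ] at hle
  have hzero : ‖ζ - φ ζ‖ = 0 := by nlinarith [norm_nonneg (ζ - φ ζ)]
  exact (sub_eq_zero.1 (norm_eq_zero.1 hzero)).symm

theorem IsSymbol.isFixedPt_of_mapClusterPt (hφ : IsSymbol φ) (hna : ¬ IsDiscAutomorphism φ)
    (hz : z ∈ ball (0 : ℂ) 1) (hcl : MapClusterPt ζ atTop (φ^[·] z)) : IsFixedPt φ ζ := by
  have hζ : ‖ζ‖ ≤ 1 := mem_closedBall_zero_iff.1 <| isClosed_closedBall.mem_of_mapClusterPt hcl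
    (.of_forall fun k => ball_subset_closedBall (hφ.mapsTo_ball.iterate k hz))
  rcases hζ.lt_or_eq with hlt | heq
  · exact hφ.isFixedPt_of_mapClusterPt_of_mem_ball hna hz (mem_ball_zero_iff.2 hlt) hcl
  · exact hφ.isFixedPt_of_mapClusterPt_of_norm_eq_one hz heq hcl

end Dynamics

section CesaroLimit

variable {φ f g : ℂ → ℂ} {p z : ℂ}

lemma cesaro_eq_birkhoffAverage (φ f : ℂ → ℂ) (n : ℕ) (z : ℂ) :
    cesaro φ f n z = birkhoffAverage ℂ φ f n (φ z) := by
  rw [cesaro, birkhoffAverage, birkhoffSum, smul_eq_mul, ← Finset.Ico_add_one_right_eq_Icc,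
    Finset.sum_Ico_eq_sum_range]
  simp only [add_tsub_cancel_right, add_comm 1, iterate_succ_apply]

lemma isDiscAlg_cesaro (hφ : IsSymbol φ) (hf : IsDiscAlg f) (n : ℕ) :
    IsDiscAlg (cesaro φ f n) := by
  have hterm : ∀ m, IsDiscAlg fun z => f (φ^[m] z) := fun m => hf.comp (hφ.iterate m)
  exact ⟨continuousOn_const.mul (continuousOn_finsetSum _ fun m _ => (hterm m).1),
    (DifferentiableOn.fun_sum fun m _ => (hterm m).2).const_mul _⟩

lemma isDiscAlg_of_tendstoUniformlyOn {F : ℕ → ℂ → ℂ} (hF : ∀ n, IsDiscAlg (F n))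
    (hg : TendstoUniformlyOn F g atTop (closedBall 0 1)) : IsDiscAlg g :=
  ⟨hg.continuousOn (.of_forall fun n => (hF n).1),
    (hg.mono ball_subset_closedBall).tendstoLocallyUniformlyOn.differentiableOn
      (.of_forall fun n => (hF n).2) isOpen_ball⟩

lemma tendsto_birkhoffAverage_of_tendstoUniformlyOn_cesaro (hφ : IsSymbol φ) (hf : IsDiscAlg f)
    (hg : TendstoUniformlyOn (cesaro φ f) g atTop (closedBall 0 1))
    (hz : z ∈ closedBall (0 : ℂ) 1) :
    Tendsto (birkhoffAverage ℂ φ f · z) atTop (𝓝 (g z)) := by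
  have hbdd : Bornology.IsBounded (range (f <| φ^[·] z)) :=
    ((isCompact_closedBall _ _).image_of_continuousOn hf.1).isBounded.subset
      (range_subset_iff.2 fun k => mem_image_of_mem f (hφ.mapsTo_closedBall.iterate k hz))
  simpa only [cesaro_eq_birkhoffAverage, sub_sub_cancel, sub_zero] using
    (hg.tendsto_at hz).sub (tendsto_birkhoffAverage_apply_sub_birkhoffAverage ℂ hbdd)

lemma cesaro_limit_map (hφ : IsSymbol φ) (hf : IsDiscAlg f)
    (hg : TendstoUniformlyOn (cesaro φ f) g atTop (closedBall 0 1))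
    (hz : z ∈ closedBall (0 : ℂ) 1) : g (φ z) = g z :=
  tendsto_nhds_unique
    (tendsto_birkhoffAverage_of_tendstoUniformlyOn_cesaro hφ hf hg (hφ.mapsTo_closedBall hz))
    (by simpa only [cesaro_eq_birkhoffAverage] using hg.tendsto_at hz)

lemma cesaro_limit_eq_of_isFixedPt (hφ : IsSymbol φ) (hf : IsDiscAlg f)
    (hg : TendstoUniformlyOn (cesaro φ f) g atTop (closedBall 0 1))
    (hz : z ∈ closedBall (0 : ℂ) 1) (hfix : IsFixedPt φ z) : g z = f z :=
  tendsto_nhds_unique (tendsto_birkhoffAverage_of_tendstoUniformlyOn_cesaro hφ hf hg hz)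
    (hfix.tendsto_birkhoffAverage ℂ f)

lemma cesaro_limit_eq_of_mapClusterPt (hφ : IsSymbol φ) (hf : IsDiscAlg f)
    (hg : TendstoUniformlyOn (cesaro φ f) g atTop (closedBall 0 1))
    (hz : z ∈ closedBall (0 : ℂ) 1) (hp : MapClusterPt p atTop (φ^[·] z)) : g p = g z := by
  have hclosed : IsClosed (closedBall (0 : ℂ) 1 ∩ g ⁻¹' {g z}) :=
    (isDiscAlg_of_tendstoUniformlyOn (isDiscAlg_cesaro hφ hf) hg).1.preimage_isClosed_of_isClosed
      isClosed_closedBall isClosed_singleton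
  have horbit : ∀ k, φ^[k] z ∈ closedBall (0 : ℂ) 1 ∩ g ⁻¹' {g z} := fun k => by
    induction k with
    | zero => exact ⟨hz, rfl⟩
    | succ k ih =>
      rw [iterate_succ_apply']
      exact ⟨hφ.mapsTo_closedBall ih.1, (cesaro_limit_map hφ hf hg ih.1).trans ih.2⟩
  exact (hclosed.mem_of_mapClusterPt hp (.of_forall horbit)).2

/-- A Denjoy–Wolff point of `φ`: the common limit of all orbits starting in `𝔻`. -/
def IsDenjoyWolffPoint (φ : ℂ → ℂ) (p : ℂ) : Prop :=
  ∀ z ∈ ball (0 : ℂ) 1, Tendsto (φ^[·] z) atTop (𝓝 p)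

lemma not_isOpen_image_of_forall_isFixedPt (hφ : IsSymbol φ) (hna : ¬ IsDiscAutomorphism φ)
    {g : ℂ → ℂ} (hg : MapsTo g (ball 0 1) (closedBall 0 1))
    (hfix : ∀ z ∈ ball (0 : ℂ) 1, IsFixedPt φ (g z)) : ¬ IsOpen (g '' ball 0 1) := by
  intro hopen
  have hsub : g '' ball 0 1 ⊆ ball 0 1 :=
    (interior_maximal hg.image_subset hopen).trans_eq (interior_closedBall 0 one_ne_zero)
  have hss : (g '' ball 0 1).Subsingleton := by
    rintro _ ⟨x, hx, rfl⟩ _ ⟨y, hy, rfl⟩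
    exact hφ.eq_of_isFixedPt hna (mem_ball_zero_iff.1 (hsub (mem_image_of_mem g hx)))
      (mem_ball_zero_iff.1 (hsub (mem_image_of_mem g hy))) (hfix x hx) (hfix y hy)
  exact (infinite_of_mem_nhds (g 0)
    (hopen.mem_nhds (mem_image_of_mem g (mem_ball_self one_pos)))) hss.finite

theorem exists_isDenjoyWolffPoint (hφ : IsSymbol φ) (hna : ¬ IsDiscAutomorphism φ)
    (hme : MeanErgodicDiscAlg φ) : ∃ p, IsDenjoyWolffPoint φ p := by
  have hid : IsDiscAlg id := ⟨continuousOn_id, differentiableOn_id⟩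
  obtain ⟨g, hg⟩ := hme id hid
  have horbit {z : ℂ} (hz : z ∈ ball (0 : ℂ) 1) :
      ∀ᶠ k in atTop, φ^[k] z ∈ closedBall (0 : ℂ) 1 :=
    .of_forall fun k => ball_subset_closedBall (hφ.mapsTo_ball.iterate k hz)
  have hcluster {z ζ : ℂ} (hz : z ∈ ball (0 : ℂ) 1) (hζ : ζ ∈ closedBall (0 : ℂ) 1)
      (hcl : MapClusterPt ζ atTop (φ^[·] z)) : ζ = g z := by
    rw [← cesaro_limit_eq_of_mapClusterPt hφ hid hg (ball_subset_closedBall hz) hcl,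
      cesaro_limit_eq_of_isFixedPt hφ hid hg hζ (hφ.isFixedPt_of_mapClusterPt hna hz hcl), id]
  have hlim {z : ℂ} (hz : z ∈ ball (0 : ℂ) 1) : Tendsto (φ^[·] z) atTop (𝓝 (g z)) :=
    (isCompact_closedBall 0 1).tendsto_nhds_of_unique_mapClusterPt (horbit hz)
      fun ζ hζ => hcluster hz hζ
  have hgd := (isDiscAlg_of_tendstoUniformlyOn (isDiscAlg_cesaro hφ hid) hg).2
  rcases (hgd.analyticOnNhd isOpen_ball).is_constant_or_isOpen
    (convex_ball (0 : ℂ) 1).isPreconnected with ⟨p, hp⟩ | hopen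
  · exact ⟨p, fun z hz => hp z hz ▸ hlim hz⟩
  · refine absurd (hopen _ subset_rfl isOpen_ball) (not_isOpen_image_of_forall_isFixedPt hφ hna
      (fun z hz => isClosed_closedBall.mem_of_tendsto (hlim hz) (horbit hz)) fun z hz => ?_)
    exact hφ.isFixedPt_of_mapClusterPt hna hz (hlim hz).mapClusterPt

end CesaroLimit

section PeriodicPoint

variable {φ f g : ℂ → ℂ} {p y : ℂ}

lemma birkhoffSum_mul_of_isPeriodicPt {α M : Type*} [AddCommMonoid M] {T : α → α} {x : α} {k : ℕ}
    (hx : IsPeriodicPt T k x) (h : α → M) (n : ℕ) :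
    birkhoffSum T h (k * n) x = n • birkhoffSum T h k x := by
  induction n with
  | zero => simp
  | succ n ih => rw [mul_add_one, birkhoffSum_add, (hx.mul_const n).eq, ih, succ_nsmul]

lemma birkhoffAverage_mul_of_isPeriodicPt {α M : Type*} (𝕜 : Type*) [Semifield 𝕜] [CharZero 𝕜]
    [AddCommMonoid M] [Module 𝕜 M] {T : α → α} {x : α} {k : ℕ} (hx : IsPeriodicPt T k x)
    (h : α → M) {n : ℕ} (hn : n ≠ 0) :
    birkhoffAverage 𝕜 T h (k * n) x = birkhoffAverage 𝕜 T h k x := by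
  rw [birkhoffAverage, birkhoffAverage, birkhoffSum_mul_of_isPeriodicPt hx, Nat.cast_mul, mul_inv,
    mul_smul, ← Nat.cast_smul_eq_nsmul 𝕜, inv_smul_smul₀ (Nat.cast_ne_zero.2 hn)]

lemma cesaro_limit_eq_birkhoffAverage_of_isPeriodicPt (hφ : IsSymbol φ) (hf : IsDiscAlg f)
    (hg : TendstoUniformlyOn (cesaro φ f) g atTop (closedBall 0 1))
    (hy : y ∈ closedBall (0 : ℂ) 1) {k : ℕ} (hk : 0 < k) (hper : IsPeriodicPt φ k y) :
    g y = birkhoffAverage ℂ φ f k y :=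
  tendsto_nhds_unique ((tendsto_birkhoffAverage_of_tendstoUniformlyOn_cesaro hφ hf hg hy).comp
      (tendsto_id.const_mul_atTop' hk))
    (tendsto_const_nhds.congr' ((eventually_ne_atTop 0).mono fun _ hn =>
      (birkhoffAverage_mul_of_isPeriodicPt ℂ hper f hn).symm))

lemma cesaro_limit_eqOn_const (hφ : IsSymbol φ) (hp : IsDenjoyWolffPoint φ p)
    (hf : IsDiscAlg f) (hg : TendstoUniformlyOn (cesaro φ f) g atTop (closedBall 0 1)) :
    EqOn g (fun _ => f p) (closedBall 0 1) := by
  have hball : EqOn g (fun _ => f p) (ball 0 1) := fun z hz => by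
    have hmem : ∀ k, φ^[k] z ∈ closedBall (0 : ℂ) 1 :=
      fun k => ball_subset_closedBall (hφ.mapsTo_ball.iterate k hz)
    have hpmem := isClosed_closedBall.mem_of_tendsto (hp z hz) (.of_forall hmem)
    have hlim := ((hf.1 p hpmem).tendsto.comp (tendsto_nhdsWithin_iff.2
      ⟨hp z hz, .of_forall hmem⟩)).cesaro_smul
    refine tendsto_nhds_unique (tendsto_birkhoffAverage_of_tendstoUniformlyOn_cesaro hφ hf hg
      (ball_subset_closedBall hz)) ?_
    simp only [birkhoffAverage_congr_ring ℂ ℝ]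
    exact hlim
  have hgc := (isDiscAlg_of_tendstoUniformlyOn (isDiscAlg_cesaro hφ hf) hg).1
  exact hball.of_subset_closure hgc continuousOn_const ball_subset_closedBall
    (closure_ball (0 : ℂ) one_ne_zero).ge

/-- Test mean ergodicity on a polynomial vanishing at `p` and on the orbit of `y` except at `y`. -/
theorem eq_of_isPeriodicPt (hφ : IsSymbol φ) (hp : IsDenjoyWolffPoint φ p)
    (hme : MeanErgodicDiscAlg φ) (hy : y ∈ closedBall (0 : ℂ) 1) {k : ℕ} (hk : 0 < k)
    (hper : IsPeriodicPt φ k y) : y = p := by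
  set m := minimalPeriod φ y
  have hm : 0 < m := hper.minimalPeriod_pos hk
  let f : ℂ → ℂ := fun z => (z - p) * ∏ j ∈ Finset.Ico 1 m, (z - φ^[j] y)
  have hfd : Differentiable ℂ f := by fun_prop
  have hf : IsDiscAlg f := ⟨hfd.continuous.continuousOn, hfd.differentiableOn⟩
  obtain ⟨g, hg⟩ := hme f hf
  have hgy : g y = 0 := by simpa [f] using cesaro_limit_eqOn_const hφ hp hf hg hy
  have hsum : birkhoffSum φ f m y = f y := by
    refine Finset.sum_eq_single_of_mem 0 (Finset.mem_range.2 hm) fun j hj hj0 => ?_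
    exact mul_eq_zero_of_right _ (Finset.prod_eq_zero
      (Finset.mem_Ico.2 ⟨Nat.one_le_iff_ne_zero.2 hj0, Finset.mem_range.1 hj⟩) (sub_self _))
  have hfy : f y = 0 := by
    have havg := cesaro_limit_eq_birkhoffAverage_of_isPeriodicPt hφ hf hg hy hm
      (isPeriodicPt_minimalPeriod φ y)
    rw [hgy, birkhoffAverage, hsum] at havg
    simpa [hm.ne'] using havg.symm
  rcases mul_eq_zero.1 hfy with h | h
  · exact sub_eq_zero.1 h
  · obtain ⟨j, hj, hjy⟩ := Finset.prod_eq_zero_iff.1 h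
    obtain ⟨hj1, hjm⟩ := Finset.mem_Ico.1 hj
    exact absurd (sub_eq_zero.1 hjy).symm
      (not_isPeriodicPt_of_pos_of_lt_minimalPeriod (by omega) hjm)

end PeriodicPoint

section CircleDegree

/-- `φ` maps the unit circle to itself with degree `d`: it has a lift `t ↦ d * t + P t` to the
angle coordinate with `P` continuous and `2π`-periodic. -/
def HasCircleDegree (φ : ℂ → ℂ) (d : ℤ) : Prop :=
  ∃ P : ℝ → ℝ, Continuous P ∧ Periodic P (2 * π) ∧
    ∀ t : ℝ, φ (exp (t * I)) = exp ((d * t + P t : ℝ) * I)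

variable {φ ψ : ℂ → ℂ} {d e : ℤ} {a c : ℂ}

lemma hasCircleDegree_const (hc : ‖c‖ = 1) : HasCircleDegree (fun _ => c) 0 :=
  ⟨fun _ => arg c, continuous_const, fun _ => rfl, fun t => by
    simpa [hc] using (norm_mul_exp_arg_mul_I c).symm⟩

lemma HasCircleDegree.mul (hφ : HasCircleDegree φ d) (hψ : HasCircleDegree ψ e) :
    HasCircleDegree (fun z => φ z * ψ z) (d + e) := by
  obtain ⟨P, hPc, hPp, hP⟩ := hφ
  obtain ⟨Q, hQc, hQp, hQ⟩ := hψ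
  refine ⟨P + Q, hPc.add hQc, hPp.add hQp, fun t => ?_⟩
  simp only [hP, hQ, ← Complex.exp_add]
  congr 1
  push_cast [Pi.add_apply]
  ring

lemma HasCircleDegree.prod {ι : Type*} {F : ι → ℂ → ℂ} {D : ι → ℤ} {s : Finset ι}
    (hF : ∀ i ∈ s, HasCircleDegree (F i) (D i)) :
    HasCircleDegree (fun z => ∏ i ∈ s, F i z) (∑ i ∈ s, D i) := by
  induction s using Finset.cons_induction with
  | empty => simpa using hasCircleDegree_const norm_one
  | cons i s hi ih =>
    simp only [Finset.prod_cons, Finset.sum_cons]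
    exact (hF i (Finset.mem_cons_self i s)).mul
      (ih fun j hj => hF j (Finset.mem_cons_of_mem hj))

lemma HasCircleDegree.comp (hφ : HasCircleDegree φ d) (hψ : HasCircleDegree ψ e) :
    HasCircleDegree (φ ∘ ψ) (d * e) := by
  obtain ⟨P, hPc, hPp, hP⟩ := hφ
  obtain ⟨Q, hQc, hQp, hQ⟩ := hψ
  refine ⟨fun t => d * Q t + P (e * t + Q t), by fun_prop, fun t => ?_, fun t => ?_⟩
  · simp only [hQp t]
    rw [show e * (t + 2 * π) + Q t = e * t + Q t + e * (2 * π) by ring, hPp.int_mul e]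
  · rw [comp_apply, hQ, hP]
    congr 2
    push_cast
    ring

lemma HasCircleDegree.congr (hφ : HasCircleDegree φ d) (h : EqOn ψ φ (sphere 0 1)) :
    HasCircleDegree ψ d := by
  obtain ⟨P, hPc, hPp, hP⟩ := hφ
  refine ⟨P, hPc, hPp, fun t => ?_⟩
  rw [h (mem_sphere_zero_iff_norm.2 (norm_exp_ofReal_mul_I t)), hP]

lemma conj_div_self_eq_exp_arg {z : ℂ} (hz : z ≠ 0) :
    conj z / z = exp ((-2 * arg z : ℝ) * I) := by
  have hpolar := norm_mul_exp_arg_mul_I z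
  generalize arg z = θ at hpolar ⊢
  rw [div_eq_iff hz, ← hpolar, map_mul, conj_ofReal, ← exp_conj, map_mul, conj_ofReal, conj_I,
    mul_left_comm, ← Complex.exp_add]
  congr 2
  push_cast
  ring

lemma blaschkeFactor_eq_mul_conj_div {z : ℂ} (hz : ‖z‖ = 1) :
    blaschkeFactor a z = z * (conj (1 - z * conj a) / (1 - z * conj a)) := by
  have hzz : z * conj z = 1 := by rw [mul_conj, normSq_eq_norm_sq, hz]; simp
  rw [blaschkeFactor, ← mul_div_assoc]
  congr 1
  simp only [map_sub, map_one, map_mul, conj_conj]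
  linear_combination a * hzz

theorem hasCircleDegree_blaschkeFactor (ha : ‖a‖ < 1) : HasCircleDegree (blaschkeFactor a) 1 := by
  have hnorm (t : ℝ) : ‖exp (t * I)‖ = 1 := norm_exp_ofReal_mul_I t
  refine ⟨fun t => -2 * arg (1 - exp (t * I) * conj a), ?_, fun t => ?_, fun t => ?_⟩
  · refine continuous_const.mul (continuous_iff_continuousAt.2 fun t => ?_)
    have hslit : 1 - exp (t * I) * conj a ∈ slitPlane :=
      Or.inl (one_sub_mul_conj_re_pos ha (hnorm t).le)
    exact (continuousAt_arg hslit).comp (f := fun t : ℝ => 1 - exp (t * I) * conj a) (by fun_prop)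
  · have hexp : exp ((t + 2 * π : ℝ) * I) = exp (t * I) := by
      push_cast
      rw [add_mul, exp_periodic]
    simp only [hexp]
  · rw [blaschkeFactor_eq_mul_conj_div (hnorm t),
      conj_div_self_eq_exp_arg (one_sub_mul_conj_ne_zero ha (hnorm t).le), ← Complex.exp_add]
    congr 1
    push_cast
    ring

lemma exists_int_mul_mem_Ioc {T x y : ℝ} (hT : 0 < T) (hxy : x + 2 * T ≤ y) :
    ∃ m : ℤ, m * T ∈ Ioc x y ∧ (m + 1) * T ∈ Ioc x y := by
  have hle : ⌊x / T⌋ * T ≤ x := (le_div_iff₀ hT).1 (Int.floor_le _)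
  have hlt : x < (⌊x / T⌋ + 1) * T := (div_lt_iff₀ hT).1 (Int.lt_floor_add_one _)
  refine ⟨⌊x / T⌋ + 1, ⟨?_, ?_⟩, ?_, ?_⟩ <;> push_cast <;> linarith

lemma isFixedPt_exp_of_map_eq {t x : ℝ} {k : ℤ} (h : φ (exp (t * I)) = exp (x * I))
    (hx : x - t = k * (2 * π)) : IsFixedPt φ (exp (t * I)) := by
  rw [IsFixedPt, h, Complex.exp_eq_exp_iff_exists_int]
  refine ⟨k, ?_⟩
  rw [← sub_eq_iff_eq_add', ← sub_mul, ← ofReal_sub, hx]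
  push_cast
  ring

/-- The displacement of the lift grows by `2π (d - 1) ≥ 4π` over one turn, hence takes at least
two values in `2πℤ`. -/
theorem HasCircleDegree.exists_isFixedPt_ne (hφ : HasCircleDegree φ d) (hd : 3 ≤ d) :
    ∃ z w : ℂ, z ≠ w ∧ ‖z‖ = 1 ∧ ‖w‖ = 1 ∧ IsFixedPt φ z ∧ IsFixedPt φ w := by
  obtain ⟨P, hPc, hPp, hP⟩ := hφ
  set h : ℝ → ℝ := fun t => d * t + P t - t
  have hc : ContinuousOn h (Icc (-π) π) := by fun_prop
  have hgrow : h (-π) + 2 * (2 * π) ≤ h π := by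
    have hPπ : P π = P (-π) := by rw [← hPp (-π)]; congr 1; ring
    have hd' : (3 : ℝ) ≤ d := by exact_mod_cast hd
    simp only [h, hPπ]
    nlinarith [Real.pi_pos]
  obtain ⟨m, hm, hm'⟩ := exists_int_mul_mem_Ioc Real.two_pi_pos hgrow
  have hle : -π ≤ π := by linarith [Real.pi_pos]
  obtain ⟨s, hs, hs'⟩ := intermediate_value_Ioc hle hc hm
  obtain ⟨t, ht, ht'⟩ := intermediate_value_Ioc hle hc hm'
  refine ⟨exp (s * I), exp (t * I), fun heq => ?_, norm_exp_ofReal_mul_I s,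
    norm_exp_ofReal_mul_I t, isFixedPt_exp_of_map_eq (hP s) hs',
    isFixedPt_exp_of_map_eq (k := m + 1) (hP t) (by exact_mod_cast ht')⟩
  have hst : s = t := by
    simpa using Complex.exp_inj_of_neg_pi_lt_of_le_pi (by simpa using hs.1) (by simpa using hs.2)
      (by simpa using ht.1) (by simpa using ht.2) heq
  rw [hst, ht'] at hs'
  linarith [Real.pi_pos]

end CircleDegree

section FiniteBlaschkeProduct

variable {ι : Type*} [Fintype ι] {φ : ℂ → ℂ} {a : ι → ℂ} {c z : ℂ}

/-- `φ` is, on the closed disc, the finite Blaschke product with unimodular constant `c` and zeros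
`a i`, listed with multiplicity. -/
structure IsFiniteBlaschkeProduct (φ : ℂ → ℂ) (c : ℂ) (a : ι → ℂ) : Prop where
  norm_const : ‖c‖ = 1
  norm_zero_lt_one : ∀ i, ‖a i‖ < 1
  eqOn : EqOn φ (fun z => c * ∏ i, blaschkeFactor (a i) z) (closedBall 0 1)

namespace IsFiniteBlaschkeProduct

lemma norm_le_prod (hB : IsFiniteBlaschkeProduct φ c a) (hz : z ∈ ball (0 : ℂ) 1)
    (s : Finset ι) : ‖φ z‖ ≤ ∏ i ∈ s, ‖blaschkeFactor (a i) z‖ := by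
  rw [hB.eqOn (ball_subset_closedBall hz), norm_mul, hB.norm_const, one_mul, norm_prod]
  exact Finset.prod_le_prod_of_subset_of_le_one (Finset.subset_univ s) (fun _ _ => norm_nonneg _)
    fun i _ _ => (norm_blaschkeFactor_lt_one (hB.norm_zero_lt_one i) (mem_ball_zero_iff.1 hz)).le

lemma isSymbol [Nonempty ι] (hB : IsFiniteBlaschkeProduct φ c a) : IsSymbol φ := by
  have hd : DifferentiableOn ℂ φ (closedBall 0 1) := ((DifferentiableOn.fun_finsetProd fun i _ =>
    differentiableOn_blaschkeFactor (hB.norm_zero_lt_one i)).const_mul c).congr hB.eqOn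
  refine ⟨⟨hd.continuousOn, hd.mono ball_subset_closedBall⟩, fun z hz => mem_ball_zero_iff.2 ?_⟩
  obtain ⟨i⟩ := ‹Nonempty ι›
  calc ‖φ z‖ ≤ ∏ j ∈ {i}, ‖blaschkeFactor (a j) z‖ := hB.norm_le_prod hz {i}
    _ = ‖blaschkeFactor (a i) z‖ := Finset.prod_singleton _ _
    _ < 1 := norm_blaschkeFactor_lt_one (hB.norm_zero_lt_one i) (mem_ball_zero_iff.1 hz)

/-- Schwarz–Pick for the inverse of `φ` gives `‖blaschkeFactor (a i) z‖ ≤ ‖φ z‖`, which leaves no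
room for a second factor. -/
theorem subsingleton_of_isDiscAutomorphism (hB : IsFiniteBlaschkeProduct φ c a)
    (hφ : IsDiscAutomorphism φ) : Subsingleton ι := by
  obtain ⟨-, hm, ψ, hψd, hψm, hψφ, -⟩ := hφ
  refine ⟨fun i j => by_contra fun hij => ?_⟩
  have hai : a i ∈ ball (0 : ℂ) 1 := mem_ball_zero_iff.2 (hB.norm_zero_lt_one i)
  have hφi : φ (a i) = 0 := by
    rw [hB.eqOn (ball_subset_closedBall hai)]
    exact mul_eq_zero_of_right _ (Finset.prod_eq_zero (Finset.mem_univ i) (blaschkeFactor_self _))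
  obtain ⟨z, hz, hzi⟩ :=
    (infinite_of_mem_nhds (a i) (isOpen_ball.mem_nhds hai)).nontrivial.exists_ne (a i)
  have hz1 : ‖z‖ < 1 := mem_ball_zero_iff.1 hz
  have hpick := norm_blaschkeFactor_map_le hψd hψm (mem_ball_zero_iff.1 (hm hz))
    (mem_ball_zero_iff.1 (hm hai))
  rw [hψφ z hz, hψφ _ hai, hφi, blaschkeFactor_zero_left] at hpick
  have hpair := hB.norm_le_prod hz {i, j}
  rw [Finset.prod_pair hij] at hpair
  have hi : 0 < ‖blaschkeFactor (a i) z‖ :=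
    norm_pos_iff.2 (blaschkeFactor_ne_zero (hB.norm_zero_lt_one i) hz1.le hzi)
  have hj := norm_blaschkeFactor_lt_one (hB.norm_zero_lt_one j) hz1
  nlinarith

lemma hasCircleDegree (hB : IsFiniteBlaschkeProduct φ c a) :
    HasCircleDegree φ (Fintype.card ι) := by
  have hprod := (hasCircleDegree_const hB.norm_const).mul (HasCircleDegree.prod (s := Finset.univ)
    fun i _ => hasCircleDegree_blaschkeFactor (hB.norm_zero_lt_one i))
  simpa using hprod.congr (hB.eqOn.mono sphere_subset_closedBall)

theorem subsingleton_of_meanErgodic (hB : IsFiniteBlaschkeProduct φ c a)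
    (hme : MeanErgodicDiscAlg φ) : Subsingleton ι := by
  by_contra hss
  have : Nontrivial ι := not_subsingleton_iff_nontrivial.1 hss
  obtain ⟨p, hp⟩ := exists_isDenjoyWolffPoint hB.isSymbol
    (fun hφ => hss (hB.subsingleton_of_isDiscAutomorphism hφ)) hme
  have hcard : (2 : ℤ) ≤ Fintype.card ι := by exact_mod_cast Fintype.one_lt_card (α := ι)
  obtain ⟨z, w, hzw, hz, hw, hφz, hφw⟩ :=
    (hB.hasCircleDegree.comp hB.hasCircleDegree).exists_isFixedPt_ne (by nlinarith)
  have heq {y : ℂ} (hy : ‖y‖ = 1) (hφy : IsFixedPt (φ ∘ φ) y) : y = p :=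
    eq_of_isPeriodicPt hB.isSymbol hp hme (mem_closedBall_zero_iff.2 hy.le) two_pos hφy
  exact hzw ((heq hz hφz).trans (heq hw hφw).symm)

end IsFiniteBlaschkeProduct

end FiniteBlaschkeProduct

section MobiusFixedPoints

variable {a c p q z : ℂ}

/-- `p` and `q` are the fixed points, with multiplicity, of `z ↦ c * blaschkeFactor a z`, that is,
the roots of `conj a * X ^ 2 - (1 - c) * X - c * a`. -/
structure IsMobiusFixedPair (c a p q : ℂ) : Prop where
  add : conj a * (p + q) = 1 - c
  mul : conj a * (p * q) = -(c * a)

lemma exists_isMobiusFixedPair (ha : a ≠ 0) (c : ℂ) : ∃ p q, IsMobiusFixedPair c a p q := by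
  have hca : conj a ≠ 0 := (map_ne_zero _).2 ha
  obtain ⟨s, hs⟩ := IsAlgClosed.exists_eq_mul_self (discrim (conj a) (c - 1) (-(c * a)))
  obtain ⟨p, hp⟩ := exists_quadratic_eq_zero hca ⟨s, hs⟩
  have hsum : conj a * (p + ((1 - c) / conj a - p)) = 1 - c := by
    rw [add_sub_cancel, mul_div_cancel₀ _ hca]
  exact ⟨p, (1 - c) / conj a - p, hsum, by linear_combination p * hsum - hp⟩

namespace IsMobiusFixedPair

lemma symm (h : IsMobiusFixedPair c a p q) : IsMobiusFixedPair c a q p :=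
  ⟨by rw [add_comm, h.add], by rw [mul_comm q, h.mul]⟩

lemma mul_blaschkeFactor_sub (h : IsMobiusFixedPair c a p q) (hz : 1 - z * conj a ≠ 0) :
    c * blaschkeFactor a z - p = (1 - q * conj a) * (z - p) / (1 - z * conj a) := by
  rw [eq_div_iff hz]
  linear_combination c * blaschkeFactor_mul_one_sub hz + z * h.add - h.mul

lemma mul_blaschkeFactor_eq_self_iff (h : IsMobiusFixedPair c a p q) (ha : a ≠ 0)
    (hz : 1 - z * conj a ≠ 0) : c * blaschkeFactor a z = z ↔ z = p ∨ z = q := by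
  have hfactor : (c * blaschkeFactor a z - z) * (1 - z * conj a) =
      conj a * ((z - p) * (z - q)) := by
    linear_combination c * blaschkeFactor_mul_one_sub hz + z * h.add - h.mul
  rw [← sub_eq_zero, ← mul_left_inj' hz, zero_mul, hfactor, mul_eq_zero, mul_eq_zero, sub_eq_zero,
    sub_eq_zero, or_iff_right ((map_ne_zero _).2 ha)]

lemma norm_mul_norm (h : IsMobiusFixedPair c a p q) (hc : ‖c‖ = 1) (ha : a ≠ 0) :
    ‖p‖ * ‖q‖ = 1 := by
  have hnorm := congrArg norm h.mul
  rw [norm_neg, norm_mul, norm_mul, norm_mul, hc, one_mul, RCLike.norm_conj] at hnorm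
  exact (mul_eq_left₀ (norm_ne_zero_iff.2 ha)).1 hnorm

/-- The multiplier `(1 - q * conj a) / (1 - p * conj a)` at a fixed point `p` on the circle is
therefore a positive real number. -/
lemma conj_mul_eq (h : IsMobiusFixedPair c a p q) (hc : c ≠ 0) (hp : ‖p‖ = 1) :
    conj (1 - p * conj a) * (1 - q * conj a) = (1 - ‖a‖ ^ 2 : ℝ) := by
  have hp0 : p ≠ 0 := norm_ne_zero_iff.1 (hp ▸ one_ne_zero)
  have hpp : p * conj p = 1 := by rw [mul_conj, normSq_eq_norm_sq, hp]; simp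
  have haa : a * conj a = (‖a‖ ^ 2 : ℝ) := by rw [mul_conj, normSq_eq_norm_sq]
  have hconj : c * conj (1 - p * conj a) = 1 - p * conj a := by
    apply mul_left_cancel₀ hp0
    simp only [map_sub, map_one, map_mul, conj_conj]
    linear_combination -c * a * hpp + p * h.add - h.mul
  apply mul_left_cancel₀ hc
  rw [← mul_assoc, hconj, ofReal_sub, ofReal_one, ← haa]
  linear_combination conj a * h.mul - h.add

lemma norm_one_sub_ne (h : IsMobiusFixedPair c a p q) (hc : c ≠ 0) (ha0 : a ≠ 0) (ha : ‖a‖ < 1)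
    (hp : ‖p‖ = 1) (hpq : p ≠ q) : ‖1 - p * conj a‖ ≠ ‖1 - q * conj a‖ := by
  intro hnorm
  have hmul := h.conj_mul_eq hc hp
  have hr : 1 - ‖a‖ ^ 2 = ‖1 - p * conj a‖ ^ 2 := by
    have hr0 : 0 ≤ 1 - ‖a‖ ^ 2 := by nlinarith [norm_nonneg a]
    rw [sq ‖1 - p * conj a‖, ← Complex.norm_of_nonneg hr0, ← hmul, norm_mul, RCLike.norm_conj,
      ← hnorm]
  rw [hr, ← normSq_eq_norm_sq, ← mul_conj, mul_comm] at hmul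
  have heq := mul_right_cancel₀ ((map_ne_zero _).2 (one_sub_mul_conj_ne_zero ha hp.le)) hmul
  exact hpq (mul_right_cancel₀ ((map_ne_zero _).2 ha0) (sub_right_injective heq)).symm

end IsMobiusFixedPair

end MobiusFixedPoints

section UniformCesaro

variable {E : Type*}

lemma card_filter_norm_add_smul_le [NormedAddCommGroup E] [NormedSpace ℝ E] {β : E}
    (hβ : β ≠ 0) (w : E) (R : ℝ) (s : Finset ℕ) :
    (s.filter fun m : ℕ => ‖w + (m : ℝ) • β‖ ≤ R).card ≤ ⌊2 * R / ‖β‖⌋₊ + 1 := by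
  set t := s.filter fun m : ℕ => ‖w + (m : ℝ) • β‖ ≤ R
  rcases t.eq_empty_or_nonempty with ht | ht
  · simp [ht]
  have hspread {i j : ℕ} (hi : i ∈ t) (hj : j ∈ t) (hij : i ≤ j) :
      j - i ≤ ⌊2 * R / ‖β‖⌋₊ := by
    refine Nat.le_floor ((le_div_iff₀ (norm_pos_iff.2 hβ)).2 ?_)
    calc ((j - i : ℕ) : ℝ) * ‖β‖ = ‖(w + (j : ℝ) • β) - (w + (i : ℝ) • β)‖ := by
          rw [add_sub_add_left_eq_sub, ← sub_smul, ← Nat.cast_sub hij, norm_smul, Real.norm_natCast]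
      _ ≤ ‖w + (j : ℝ) • β‖ + ‖w + (i : ℝ) • β‖ := norm_sub_le _ _
      _ ≤ 2 * R := by linarith [(Finset.mem_filter.1 hi).2, (Finset.mem_filter.1 hj).2]
  have hsub : t ⊆ Finset.Icc (t.min' ht) (t.min' ht + ⌊2 * R / ‖β‖⌋₊) := fun j hj =>
    have hle := t.min'_le j hj
    Finset.mem_Icc.2 ⟨hle, (tsub_le_iff_left).1 (hspread (t.min'_mem ht) hj hle)⟩
  simpa [add_assoc] using Finset.card_le_card hsub

lemma norm_sum_le_card_mul_add_card_filter_mul [SeminormedAddCommGroup E] {ι : Type*}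
    {s : Finset ι} {v : ι → E} {C ε : ℝ} (hε : 0 ≤ ε) (hC : ∀ i ∈ s, ‖v i‖ ≤ C) :
    ‖∑ i ∈ s, v i‖ ≤ s.card * ε + (s.filter fun i => ε < ‖v i‖).card * C := by
  calc ‖∑ i ∈ s, v i‖ ≤ ∑ i ∈ s, (ε + if ε < ‖v i‖ then C else 0) :=
        norm_sum_le_of_le s fun i hi => by split_ifs with h <;> linarith [hC i hi]
    _ = s.card * ε + (s.filter fun i => ε < ‖v i‖).card * C := by
        simp only [Finset.sum_add_distrib, ← Finset.sum_filter, Finset.sum_const, nsmul_eq_mul]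

theorem tendstoUniformlyOn_cesaro_of_card_filter_le (𝕜 : Type*) [RCLike 𝕜]
    [SeminormedAddCommGroup E] [NormedSpace 𝕜 E] {X : Type*} {S : Set X} {u : ℕ → X → E}
    {l : E} {C : ℝ} (hC : ∀ x ∈ S, ∀ m, ‖u m x - l‖ ≤ C)
    (hcard : ∀ ε > 0, ∃ N : ℕ, ∀ x ∈ S, ∀ n,
      ((Finset.Icc 1 n).filter fun m => ε < ‖u m x - l‖).card ≤ N) :
    TendstoUniformlyOn (fun (n : ℕ) x => (n : 𝕜)⁻¹ • ∑ m ∈ Finset.Icc 1 n, u m x) (fun _ => l) atTop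
      S := by
  rw [Metric.tendstoUniformlyOn_iff]
  intro ε hε
  obtain ⟨N, hN⟩ := hcard (ε / 2) (half_pos hε)
  have hlim : Tendsto (fun n : ℕ => N * C / n) atTop (𝓝 0) :=
    tendsto_const_div_atTop_nhds_zero_nat _
  filter_upwards [hlim.eventually_lt_const (half_pos hε), eventually_gt_atTop 0] with n hn hn0 x hx
  have hn0' : (0 : ℝ) < n := Nat.cast_pos.2 hn0
  have hC0 : 0 ≤ C := (norm_nonneg _).trans (hC x hx 0)
  have hmean : (n : 𝕜)⁻¹ • ∑ m ∈ Finset.Icc 1 n, u m x - l =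
      (n : 𝕜)⁻¹ • ∑ m ∈ Finset.Icc 1 n, (u m x - l) := by
    rw [Finset.sum_sub_distrib, Finset.sum_const, Nat.card_Icc, add_tsub_cancel_right, smul_sub,
      ← Nat.cast_smul_eq_nsmul 𝕜, inv_smul_smul₀ (Nat.cast_ne_zero.2 hn0.ne')]
  have hsum := norm_sum_le_card_mul_add_card_filter_mul (s := Finset.Icc 1 n)
    (half_pos hε).le fun m _ => hC x hx m
  rw [dist_comm, dist_eq_norm, hmean, norm_smul, norm_inv, RCLike.norm_natCast,
    inv_mul_lt_iff₀ hn0']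
  calc ‖∑ m ∈ Finset.Icc 1 n, (u m x - l)‖ ≤ n * (ε / 2) + N * C := by
        refine hsum.trans ?_
        rw [Nat.card_Icc, add_tsub_cancel_right]
        gcongr
        exact hN x hx n
    _ < n * ε := by rw [div_lt_iff₀ hn0'] at hn; linarith

end UniformCesaro

section LinearModels

variable {φ : ℂ → ℂ} {p q z β κ : ℂ}

lemma inv_iterate_sub_eq {S : Set ℂ} (hm : MapsTo φ S S)
    (h : ∀ z ∈ S, z ≠ p → φ z ≠ p ∧ (φ z - p)⁻¹ = (z - p)⁻¹ + β) (hz : z ∈ S) (hzp : z ≠ p)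
    (m : ℕ) : φ^[m] z ≠ p ∧ (φ^[m] z - p)⁻¹ = (z - p)⁻¹ + (m : ℝ) • β := by
  induction m with
  | zero => simpa using hzp
  | succ m ih =>
    obtain ⟨hne, hinv⟩ := h _ (hm.iterate m hz) ih.1
    rw [iterate_succ_apply', hinv, ih.2]
    exact ⟨hne, by push_cast [add_smul, one_smul]; ring⟩

theorem meanErgodicDiscAlg_of_inv_sub_eq (hφ : IsSymbol φ) (hp : p ∈ closedBall (0 : ℂ) 1)
    (hfix : IsFixedPt φ p) (hβ : β ≠ 0)
    (h : ∀ z ∈ closedBall (0 : ℂ) 1, z ≠ p → φ z ≠ p ∧ (φ z - p)⁻¹ = (z - p)⁻¹ + β) :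
    MeanErgodicDiscAlg φ := by
  intro f hf
  obtain ⟨M, hM⟩ := (isCompact_closedBall (0 : ℂ) 1).exists_bound_of_continuousOn
    (hf.1.sub (continuousOn_const (c := f p)))
  refine ⟨fun _ => f p, tendstoUniformlyOn_cesaro_of_card_filter_le ℂ (u := fun m z => f (φ^[m] z))
    (fun z hz m => hM _ (hφ.mapsTo_closedBall.iterate m hz)) fun ε hε => ?_⟩
  obtain ⟨δ, hδ, hfδ⟩ := Metric.continuousOn_iff.1 hf.1 p hp ε hε
  refine ⟨⌊2 * δ⁻¹ / ‖β‖⌋₊ + 1, fun z hz n => ?_⟩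
  rcases eq_or_ne z p with rfl | hzp
  · simp [iterate_fixed hfix, hε.not_gt]
  refine (Finset.card_le_card (Finset.monotone_filter_right _ fun m _ hm => ?_)).trans
    (card_filter_norm_add_smul_le hβ (z - p)⁻¹ δ⁻¹ (Finset.Icc 1 n))
  rw [← (inv_iterate_sub_eq hφ.mapsTo_closedBall h hz hzp m).2, norm_inv]
  refine inv_anti₀ hδ (not_lt.1 fun hlt => hm.not_gt ?_)
  simpa only [dist_eq_norm] using
    hfδ _ (hφ.mapsTo_closedBall.iterate m hz) (by rwa [dist_eq_norm])

lemma isDenjoyWolffPoint_of_div_sub_eq (hm : MapsTo φ (ball 0 1) (ball 0 1)) (hq : 1 ≤ ‖q‖)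
    (hκ : ‖κ‖ < 1)
    (h : ∀ z ∈ ball (0 : ℂ) 1, (φ z - p) / (φ z - q) = κ * ((z - p) / (z - q))) :
    IsDenjoyWolffPoint φ p := by
  intro z hz
  have horbit (k : ℕ) : ‖φ^[k] z‖ < 1 := mem_ball_zero_iff.1 (hm.iterate k hz)
  have hpow (k : ℕ) : (φ^[k] z - p) / (φ^[k] z - q) = κ ^ k * ((z - p) / (z - q)) := by
    induction k with
    | zero => simp
    | succ k ih => rw [iterate_succ_apply', h _ (hm.iterate k hz), ih, pow_succ', mul_assoc]
  have hlim : Tendsto (fun k => ‖κ‖ ^ k * ‖(z - p) / (z - q)‖ * (1 + ‖q‖)) atTop (𝓝 0) := by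
    simpa using ((tendsto_pow_atTop_nhds_zero_of_lt_one (norm_nonneg κ) hκ).mul_const
      ‖(z - p) / (z - q)‖).mul_const (1 + ‖q‖)
  refine tendsto_iff_norm_sub_tendsto_zero.2 (squeeze_zero (fun _ => norm_nonneg _) (fun k => ?_)
    hlim)
  have hne : φ^[k] z - q ≠ 0 := sub_ne_zero.2 fun heq => by linarith [horbit k, heq ▸ hq]
  rw [← div_mul_cancel₀ (φ^[k] z - p) hne, hpow, norm_mul, norm_mul, norm_pow]
  gcongr
  linarith [norm_sub_le (φ^[k] z) q, horbit k]

end LinearModels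

section BlaschkeAutomorphism

variable {ι : Type*} [Fintype ι] [Unique ι] {φ : ℂ → ℂ} {a : ι → ℂ} {c p q z : ℂ}

namespace IsFiniteBlaschkeProduct

lemma eq_mul_blaschkeFactor (hB : IsFiniteBlaschkeProduct φ c a) (hz : ‖z‖ ≤ 1) :
    φ z = c * blaschkeFactor (a default) z := by
  simpa using hB.eqOn (mem_closedBall_zero_iff.2 hz)

lemma isDiscAutomorphism (hB : IsFiniteBlaschkeProduct φ c a) : IsDiscAutomorphism φ :=
  ((isDiscAutomorphism_const_mul hB.norm_const).comp
    (isDiscAutomorphism_blaschkeFactor (hB.norm_zero_lt_one default))).congr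
    fun _ hz => hB.eq_mul_blaschkeFactor (mem_ball_zero_iff.1 hz).le

lemma map_eq_self_iff (hB : IsFiniteBlaschkeProduct φ c a)
    (h : IsMobiusFixedPair c (a default) p q) (ha : a default ≠ 0) (hz : ‖z‖ ≤ 1) :
    φ z = z ↔ z = p ∨ z = q := by
  rw [hB.eq_mul_blaschkeFactor hz]
  exact h.mul_blaschkeFactor_eq_self_iff ha
    (one_sub_mul_conj_ne_zero (hB.norm_zero_lt_one default) hz)

lemma map_sub_eq (hB : IsFiniteBlaschkeProduct φ c a)
    (h : IsMobiusFixedPair c (a default) p q) (hz : ‖z‖ ≤ 1) :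
    φ z - p = (1 - q * conj (a default)) * (z - p) / (1 - z * conj (a default)) := by
  rw [hB.eq_mul_blaschkeFactor hz]
  exact h.mul_blaschkeFactor_sub (one_sub_mul_conj_ne_zero (hB.norm_zero_lt_one default) hz)

lemma exists_isMobiusFixedPair_norm_eq_one (hB : IsFiniteBlaschkeProduct φ c a)
    (hfix : ∀ z ∈ ball (0 : ℂ) 1, φ z ≠ z) :
    a default ≠ 0 ∧ ∃ p q, IsMobiusFixedPair c (a default) p q ∧ ‖p‖ = 1 ∧ ‖q‖ = 1 := by
  have ha : a default ≠ 0 := fun ha => hfix 0 (mem_ball_self one_pos) <| by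
    rw [hB.eq_mul_blaschkeFactor (by simp), ha, blaschkeFactor_self, mul_zero]
  refine ⟨ha, ?_⟩
  obtain ⟨p, q, h⟩ := exists_isMobiusFixedPair ha c
  have hge {p q : ℂ} (h : IsMobiusFixedPair c (a default) p q) : 1 ≤ ‖p‖ :=
    not_lt.1 fun hp => hfix p (mem_ball_zero_iff.2 hp)
      ((hB.map_eq_self_iff h ha hp.le).2 (.inl rfl))
  have hpq := h.norm_mul_norm hB.norm_const ha
  have hp := hge h
  have hq := hge h.symm
  exact ⟨p, q, h, by nlinarith, by nlinarith⟩

lemma isDenjoyWolffPoint (hB : IsFiniteBlaschkeProduct φ c a)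
    (h : IsMobiusFixedPair c (a default) p q) (hq : 1 ≤ ‖q‖)
    (hlt : ‖1 - q * conj (a default)‖ < ‖1 - p * conj (a default)‖) :
    IsDenjoyWolffPoint φ p := by
  have hp0 : 0 < ‖1 - p * conj (a default)‖ := (norm_nonneg _).trans_lt hlt
  refine isDenjoyWolffPoint_of_div_sub_eq hB.isSymbol.mapsTo_ball hq
    (κ := (1 - q * conj (a default)) / (1 - p * conj (a default)))
    (by rwa [norm_div, div_lt_one hp0]) fun z hz => ?_
  have hz1 : ‖z‖ ≤ 1 := (mem_ball_zero_iff.1 hz).le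
  rw [hB.map_sub_eq h hz1, hB.map_sub_eq h.symm hz1, div_div_div_cancel_right₀
    (one_sub_mul_conj_ne_zero (hB.norm_zero_lt_one default) hz1), mul_div_mul_comm]

theorem isParabolicAutomorphism_of_meanErgodic (hB : IsFiniteBlaschkeProduct φ c a)
    (hell : ¬ IsEllipticAutomorphism φ) (hme : MeanErgodicDiscAlg φ) :
    IsParabolicAutomorphism φ := by
  obtain ⟨ha, p, q, h, hp, hq⟩ := hB.exists_isMobiusFixedPair_norm_eq_one
    fun z hz hφz => hell ⟨hB.isDiscAutomorphism, z, hz, hφz⟩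
  have hrepelling {p q : ℂ} (h : IsMobiusFixedPair c (a default) p q) (hq : ‖q‖ = 1)
      (hlt : ‖1 - q * conj (a default)‖ < ‖1 - p * conj (a default)‖) : q = p :=
    eq_of_isPeriodicPt hB.isSymbol (hB.isDenjoyWolffPoint h hq.ge hlt) hme
      (mem_closedBall_zero_iff.2 hq.le) one_pos
      (IsFixedPt.isPeriodicPt ((hB.map_eq_self_iff h ha hq.le).2 (.inr rfl)) 1)
  have hpq : p = q := by
    by_contra hne
    have hc : c ≠ 0 := norm_ne_zero_iff.1 (hB.norm_const ▸ one_ne_zero)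
    rcases (h.norm_one_sub_ne hc ha (hB.norm_zero_lt_one default) hp hne).lt_or_gt with hlt | hlt
    · exact hne (hrepelling h.symm hp hlt)
    · exact hne (hrepelling h hq hlt).symm
  subst hpq
  exact ⟨hB.isDiscAutomorphism, p, hp, (hB.map_eq_self_iff h ha hp.le).2 (.inl rfl), fun z hz hφz =>
    (or_self_iff.1 ((hB.map_eq_self_iff h ha (mem_closedBall_zero_iff.1 hz)).1 hφz))⟩

theorem meanErgodic_of_isParabolicAutomorphism (hB : IsFiniteBlaschkeProduct φ c a)
    (hpar : IsParabolicAutomorphism φ) : MeanErgodicDiscAlg φ := by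
  obtain ⟨-, p₀, hp₀, -, huniq⟩ := hpar
  obtain ⟨ha, p, q, h, hp, hq⟩ := hB.exists_isMobiusFixedPair_norm_eq_one fun z hz hφz =>
    (mem_ball_zero_iff.1 hz).ne (huniq z (ball_subset_closedBall hz) hφz ▸ hp₀)
  have hφp : φ p = p := (hB.map_eq_self_iff h ha hp.le).2 (.inl rfl)
  have hφq : φ q = q := (hB.map_eq_self_iff h ha hq.le).2 (.inr rfl)
  have hqp : q = p := (huniq q (mem_closedBall_zero_iff.2 hq.le) hφq).trans
    (huniq p (mem_closedBall_zero_iff.2 hp.le) hφp).symm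
  subst hqp
  have ha1 := hB.norm_zero_lt_one default
  have hden := one_sub_mul_conj_ne_zero ha1 hp.le
  refine meanErgodicDiscAlg_of_inv_sub_eq hB.isSymbol (mem_closedBall_zero_iff.2 hp.le) hφp
    (β := -conj (a default) / (1 - q * conj (a default)))
    (div_ne_zero (neg_ne_zero.2 ((map_ne_zero _).2 ha)) hden) fun z hz hzq => ?_
  have hz1 : ‖z‖ ≤ 1 := mem_closedBall_zero_iff.1 hz
  have hzden := one_sub_mul_conj_ne_zero ha1 hz1
  have hzq0 : z - q ≠ 0 := sub_ne_zero.2 hzq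
  have hsub := hB.map_sub_eq h hz1
  refine ⟨sub_ne_zero.1 (hsub ▸ div_ne_zero (mul_ne_zero hden hzq0) hzden), ?_⟩
  rw [hsub]
  field_simp
  ring

end IsFiniteBlaschkeProduct

end BlaschkeAutomorphism

/-- **Finite Blaschke product symbols.** Let `φ` be a finite Blaschke product which is not
an elliptic automorphism of `𝔻`. Then `C_φ : A(𝔻) → A(𝔻)` is mean ergodic if and only if
`φ` is a parabolic automorphism of `𝔻`. -/
theorem stmt_14 (φ : ℂ → ℂ)
    (hB : ∃ n : ℕ, 1 ≤ n ∧ ∃ θ : ℝ, ∃ a : Fin n → ℂ, (∀ i, ‖a i‖ < 1) ∧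
      ∀ z ∈ closedBall (0:ℂ) 1,
        φ z = Complex.exp (θ * Complex.I) *
          ∏ i, (z - a i) / (1 - z * (starRingEnd ℂ) (a i)))
    (hne : ¬ IsEllipticAutomorphism φ) :
    MeanErgodicDiscAlg φ ↔ IsParabolicAutomorphism φ := by
  obtain ⟨n, hn, θ, a, ha, hφ⟩ := hB
  have : Nonempty (Fin n) := ⟨⟨0, hn⟩⟩
  have hB : IsFiniteBlaschkeProduct φ (exp (θ * I)) a := ⟨norm_exp_ofReal_mul_I θ, ha, hφ⟩
  constructor
  · intro hme
    have := hB.subsingleton_of_meanErgodic hme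
    have := Classical.choice (nonempty_unique (Fin n))
    exact hB.isParabolicAutomorphism_of_meanErgodic hne hme
  · intro hpar
    have := hB.subsingleton_of_isDiscAutomorphism hpar.1
    have := Classical.choice (nonempty_unique (Fin n))
    exact hB.meanErgodic_of_isParabolicAutomorphism hpar
end
end
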